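/- arXiv:2103.12684 — 5 statements merged into one kernel-verified Lean document; each statement's English description precedes it below -/
import Mathlib

section
/- Let μ be a compactly supported probability measure on ℝ^d. Then the function y ↦ H(μ * n_y) from (0, ∞) to ℝ: (1) is monotonically increasing; (2) has both one-sided derivatives (left-hand and right-hand) at every point of (0, ∞); (3) is continuous; and (4) both one-sided derivatives are decreasing functions of y. -/
open MeasureTheory Real

/-- Density of the centered Gaussian on `ℝ^d` with covariance matrix `y • I`. -/
noncomputable def gaussD (d : ℕ) (y : ℝ) (x : EuclideanSpace ℝ (Fin d)) : ℝ :=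
  (2 * Real.pi * y) ^ (-(d : ℝ) / 2) * Real.exp (-‖x‖ ^ 2 / (2 * y))

/-- The differential entropy `H(μ * n_y) = ∫ -f log f` where `f` is the density of `μ * n_y`. -/
noncomputable def entG (d : ℕ) (μ : Measure (EuclideanSpace ℝ (Fin d))) (y : ℝ) : ℝ :=
  ∫ x, Real.negMulLog (∫ z, gaussD d y (x - z) ∂μ)

section aux1

lemma concave_of_incr (φ : ℝ → ℝ) (hm : MonotoneOn φ (Set.Ioi 0))
    (hs : ∀ y s t : ℝ, 0 < y → 0 < s → 0 < t → φ (y + s + t) + φ y ≤ φ (y + s) + φ (y + t)) :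
    ConcaveOn ℝ (Set.Ioi 0) φ := by
  apply concaveOn_of_slope_anti_adjacent (convex_Ioi 0)
  intro x y z hx hz hxy hyz
  have hx : 0 < x := hx
  have h1 : ∀ (y δ : ℝ), 0 < y → 0 < δ → ∀ k : ℕ,
      φ (y + k * δ) - φ y ≤ k * (φ (y + δ) - φ y) := by
    intro y δ hy hδ k
    induction k with
    | zero => simp
    | succ k ih =>
      rcases Nat.eq_zero_or_pos k with h | h
      · subst h; simp
      · have := hs y (k * δ) δ hy (by positivity) hδ
        push_cast
        rw [show y + (k + 1) * δ = y + k * δ + δ by ring]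
        linarith
  have h2 : ∀ (x δ : ℝ), 0 < x → 0 < δ → ∀ k : ℕ,
      k * (φ (x + k * δ + δ) - φ (x + k * δ)) ≤ φ (x + k * δ) - φ x := by
    intro x δ hx hδ k
    induction k with
    | zero => simp
    | succ k ih =>
      have h := hs (x + k * δ) δ δ (by positivity) hδ hδ
      push_cast
      rw [show x + (k + 1) * δ = x + k * δ + δ by ring]
      have hk : (0 : ℝ) ≤ k := by positivity
      nlinarith
  have key : ∀ n : ℕ, 0 < n →
      φ z - φ y ≤ ((z - y) / (y - x) + 1 / n) * (φ y - φ x) := by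
    intro n hn
    have hn' : (0 : ℝ) < n := by exact_mod_cast hn
    set δ := (y - x) / n with hδ
    have hδ0 : 0 < δ := div_pos (by linarith) hn'
    have hnd : x + n * δ = y := by rw [hδ]; field_simp; ring
    set m := ⌊(z - y) / δ⌋₊ with hmdef
    have hm1 : (z - y) / δ < m + 1 := Nat.lt_floor_add_one _
    have hm2 : (m : ℝ) ≤ (z - y) / δ := Nat.floor_le (div_nonneg (by linarith) hδ0.le)
    have hz2 : z ≤ y + ((m + 1 : ℕ) : ℝ) * δ := by
      rw [div_lt_iff₀ hδ0] at hm1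
      push_cast; linarith
    have e1 := hm (show z ∈ Set.Ioi 0 from hz)
      (show y + ((m + 1 : ℕ) : ℝ) * δ ∈ Set.Ioi 0 from lt_of_lt_of_le hz hz2) hz2
    have e2 := h1 y δ (by linarith) hδ0 (m + 1)
    have e3 := h2 x δ hx hδ0 n
    rw [hnd] at e3
    have e4 : 0 ≤ φ y - φ x := by
      have := hm (show x ∈ Set.Ioi 0 from hx) (show y ∈ Set.Ioi 0 from hx.trans hxy) hxy.le
      linarith
    have e5 : φ (y + δ) - φ y ≤ (φ y - φ x) / n := by
      rw [le_div_iff₀ hn']; linarith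
    have e6 : ((m + 1 : ℕ) : ℝ) * (φ (y + δ) - φ y) ≤ ((m + 1 : ℕ) : ℝ) * ((φ y - φ x) / n) :=
      mul_le_mul_of_nonneg_left e5 (by positivity)
    have e7 : ((m + 1 : ℕ) : ℝ) / n ≤ (z - y) / (y - x) + 1 / n := by
      have : (z - y) / (y - x) = (z - y) / δ / n := by
        rw [hδ]; have : y - x ≠ 0 := by linarith
        field_simp
      rw [this, ← add_div]
      push_cast
      gcongr
    calc φ z - φ y ≤ ((m + 1 : ℕ) : ℝ) * ((φ y - φ x) / n) := by linarith
      _ = ((m + 1 : ℕ) : ℝ) / n * (φ y - φ x) := by ring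
      _ ≤ _ := mul_le_mul_of_nonneg_right e7 e4
  have lim : Filter.Tendsto (fun n : ℕ => ((z - y) / (y - x) + 1 / (n : ℝ)) * (φ y - φ x))
      Filter.atTop (nhds (((z - y) / (y - x) + 0) * (φ y - φ x))) :=
    (tendsto_const_nhds.add tendsto_one_div_atTop_nhds_zero_nat).mul_const _
  have fin := ge_of_tendsto lim (Filter.eventually_atTop.2 ⟨1, fun n hn => key n hn⟩)
  rw [div_le_iff₀ (by linarith)]
  calc _ ≤ _ := fin
    _ = _ := by ring

lemma integral_nonneg_of_exp {Ω : Type*} [MeasurableSpace Ω] (M : Measure Ω)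
    [IsProbabilityMeasure M] (L : Ω → ℝ) (hL : Integrable L M)
    (h : ∫⁻ w, ENNReal.ofReal (exp (-L w)) ∂M ≤ 1) : 0 ≤ ∫ w, L w ∂M := by
  have hm : AEStronglyMeasurable (fun w => exp (-L w)) M :=
    continuous_exp.comp_aestronglyMeasurable hL.1.neg
  have hi : Integrable (fun w => exp (-L w)) M := by
    refine (lintegral_ofReal_ne_top_iff_integrable hm (Filter.Eventually.of_forall fun _ => (exp_pos _).le)).1 ?_
    exact ne_top_of_le_ne_top ENNReal.one_ne_top h
  have h1 : ∫ w, exp (-L w) ∂M ≤ 1 := by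
    rw [integral_eq_lintegral_of_nonneg_ae (Filter.Eventually.of_forall fun _ => (exp_pos _).le) hm]
    exact ENNReal.toReal_le_of_le_ofReal zero_le_one (by simpa using h)
  have h2 : ∫ w, (1 - exp (-L w)) ∂M ≤ ∫ w, L w ∂M := by
    refine integral_mono ((integrable_const _).sub hi) hL fun w => ?_
    have := add_one_le_exp (-L w)
    simp only; linarith
  rw [integral_sub (integrable_const _) hi] at h2
  simp at h2
  linarith

variable {d : ℕ}

local notation "E" => EuclideanSpace ℝ (Fin d)

lemma integrable_gexp (b : ℝ) (hb : 0 < b) : Integrable (fun v : E => exp (-b * ‖v‖ ^ 2)) := by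
  by_contra h
  have h1 := GaussianFourier.integral_rexp_neg_mul_sq_norm (V := E) hb
  rw [integral_undef h] at h1
  have : 0 < (π / b) ^ ((Module.finrank ℝ E : ℝ) / 2) := by positivity
  linarith

lemma lint_gexp (b : ℝ) (hb : 0 < b) (m : E) :
    ∫⁻ v : E, ENNReal.ofReal (exp (-b * ‖v - m‖ ^ 2)) = ENNReal.ofReal ((π / b) ^ ((d : ℝ) / 2)) := by
  rw [lintegral_sub_right_eq_self (fun v : E => ENNReal.ofReal (exp (-b * ‖v‖ ^ 2))) m,
    ← ofReal_integral_eq_lintegral_ofReal (integrable_gexp b hb)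
      (Filter.Eventually.of_forall fun _ => (exp_pos _).le),
    GaussianFourier.integral_rexp_neg_mul_sq_norm hb]
  simp

lemma gaussD_pos (y : ℝ) (hy : 0 < y) (x : E) : 0 < gaussD d y x := by
  unfold gaussD; positivity

lemma gaussD_cont (y : ℝ) : Continuous (gaussD d y) := by
  unfold gaussD; fun_prop

noncomputable def GG (d : ℕ) (y : ℝ) (x : EuclideanSpace ℝ (Fin d)) : ENNReal :=
  ENNReal.ofReal (gaussD d y x)

lemma GG_meas (y : ℝ) : Measurable (GG d y) :=
  ((gaussD_cont y).measurable).ennreal_ofReal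

lemma GG_int (y : ℝ) (hy : 0 < y) : ∫⁻ x, GG d y x = 1 := by
  have h : ∀ x : E, GG d y x = ENNReal.ofReal ((2 * π * y) ^ (-(d : ℝ) / 2)) *
      ENNReal.ofReal (exp (-(1 / (2 * y)) * ‖x - 0‖ ^ 2)) := by
    intro x
    rw [← ENNReal.ofReal_mul (by positivity), GG, gaussD]
    congr 3
    rw [sub_zero]; ring
  simp_rw [h]
  rw [lintegral_const_mul _ (by fun_prop), lint_gexp _ (by positivity),
    ← ENNReal.ofReal_mul (by positivity), ← ENNReal.ofReal_one]
  congr 1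
  rw [show π / (1 / (2 * y)) = 2 * π * y by field_simp, ← rpow_add (by positivity)]
  rw [show -(d : ℝ) / 2 + d / 2 = 0 by ring, rpow_zero]

lemma GG_semi (y s : ℝ) (hy : 0 < y) (hs : 0 < s) (x : E) :
    ∫⁻ a, GG d s a * GG d y (x - a) = GG d (y + s) x := by
  have key : ∀ a : E, -‖a‖ ^ 2 / (2 * s) + -‖x - a‖ ^ 2 / (2 * y) =
      -‖x‖ ^ 2 / (2 * (y + s)) +
        -((y + s) / (2 * s * y)) * ‖a - (s / (y + s)) • x‖ ^ 2 := by
    intro a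
    rw [norm_sub_sq_real, norm_sub_sq_real, norm_smul, inner_smul_right, real_inner_comm x a,
      Real.norm_of_nonneg (by positivity)]
    field_simp
    ring
  have h : ∀ a : E, GG d s a * GG d y (x - a) =
      ENNReal.ofReal ((2 * π * s) ^ (-(d : ℝ) / 2) * (2 * π * y) ^ (-(d : ℝ) / 2) *
        exp (-‖x‖ ^ 2 / (2 * (y + s)))) *
      ENNReal.ofReal (exp (-((y + s) / (2 * s * y)) * ‖a - (s / (y + s)) • x‖ ^ 2)) := by
    intro a
    rw [← ENNReal.ofReal_mul (by positivity), GG, GG, ← ENNReal.ofReal_mul (gaussD_pos s hs a).le]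
    congr 1
    rw [mul_assoc, ← exp_add, ← key, exp_add, gaussD, gaussD]
    ring
  simp_rw [h]
  rw [lintegral_const_mul _ (by fun_prop), lint_gexp _ (by positivity),
    ← ENNReal.ofReal_mul (by positivity), GG, gaussD]
  congr 1
  have : (2 * π * s) ^ (-(d : ℝ) / 2) * (2 * π * y) ^ (-(d : ℝ) / 2) *
      (π / ((y + s) / (2 * s * y))) ^ ((d : ℝ) / 2) = (2 * π * (y + s)) ^ (-(d : ℝ) / 2) := by
    rw [show (π / ((y + s) / (2 * s * y))) ^ ((d : ℝ) / 2) =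
      ((π / ((y + s) / (2 * s * y)))⁻¹) ^ (-(d : ℝ) / 2) by
        rw [inv_rpow (by positivity), ← rpow_neg (by positivity)]; congr 1; ring]
    rw [← mul_rpow (by positivity) (by positivity), ← mul_rpow (by positivity) (by positivity)]
    congr 1
    field_simp
  rw [← this]; ring

noncomputable def FF (μ : Measure E) (y : ℝ) (x : E) : ENNReal := ∫⁻ z, GG d y (x - z) ∂μ

lemma FF_meas (μ : Measure E) [IsProbabilityMeasure μ] (y : ℝ) : Measurable (FF μ y) := by
  have := GG_meas (d := d) y
  unfold FF
  exact Measurable.lintegral_prod_right' (f := fun p : E × E => GG d y (p.1 - p.2)) (by fun_prop)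

noncomputable def gam (d : ℕ) (s : ℝ) : Measure (EuclideanSpace ℝ (Fin d)) :=
  volume.withDensity (GG d s)

noncomputable def nu (μ : Measure E) (y : ℝ) : Measure E := volume.withDensity (FF μ y)

lemma gam_prob (s : ℝ) (hs : 0 < s) : IsProbabilityMeasure (gam d s) :=
  ⟨by rw [gam, withDensity_apply _ MeasurableSet.univ, setLIntegral_univ, GG_int s hs]⟩

lemma FF_int (μ : Measure E) [IsProbabilityMeasure μ] (y : ℝ) (hy : 0 < y) :
    ∫⁻ x, FF μ y x = 1 := by
  unfold FF
  have := GG_meas (d := d) y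
  rw [lintegral_lintegral_swap (by fun_prop)]
  simp_rw [lintegral_sub_right_eq_self (fun x : E => GG d y x), GG_int y hy]
  simp

lemma nu_prob (μ : Measure E) [IsProbabilityMeasure μ] (s : ℝ) (hs : 0 < s) :
    IsProbabilityMeasure (nu μ s) :=
  ⟨by rw [nu, withDensity_apply _ MeasurableSet.univ, setLIntegral_univ, FF_int μ s hs]⟩

lemma FF_semi (μ : Measure E) [IsProbabilityMeasure μ] (y s : ℝ) (hy : 0 < y) (hs : 0 < s) (x : E) :
    ∫⁻ a, FF μ y (x - a) ∂(gam d s) = FF μ (y + s) x := by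
  have h1 := GG_meas (d := d) y
  have h2 := GG_meas (d := d) s
  have := gam_prob (d := d) s hs
  unfold FF
  rw [lintegral_lintegral_swap (by fun_prop)]
  congr 1
  ext z
  rw [gam, lintegral_withDensity_eq_lintegral_mul _ h2 (by fun_prop), ← GG_semi y s hy hs]
  simp only [Pi.mul_apply]
  congr 1
  ext a
  congr 2
  abel

lemma lint_nu_trans (μ : Measure E) [IsProbabilityMeasure μ] (y : ℝ) (a : E) (h : E → ENNReal)
    (hh : Measurable h) :
    ∫⁻ z, h (z + a) ∂(nu μ y) = ∫⁻ x, FF μ y (x - a) * h x := by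
  have := FF_meas μ y
  rw [nu, lintegral_withDensity_eq_lintegral_mul _ this (by fun_prop),
    ← lintegral_add_right_eq_self (fun x => FF μ y (x - a) * h x) a]
  simp

lemma mp_add (μ : Measure E) [IsProbabilityMeasure μ] (y s : ℝ) (hy : 0 < y) (hs : 0 < s) :
    MeasurePreserving (fun p : E × E => p.1 + p.2) ((nu μ y).prod (gam d s)) (nu μ (y + s)) := by
  have := gam_prob (d := d) s hs
  have := nu_prob μ y hy
  have hf := FF_meas μ y
  refine ⟨by fun_prop, ?_⟩
  refine Measure.ext_of_lintegral _ fun h hh => ?_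
  rw [lintegral_map hh (by fun_prop), lintegral_prod_symm _ (by fun_prop)]
  simp_rw [lint_nu_trans μ y _ h hh]
  rw [lintegral_lintegral_swap (by fun_prop), nu,
    lintegral_withDensity_eq_lintegral_mul _ (FF_meas μ (y + s)) hh]
  congr 1
  ext x
  rw [lintegral_mul_const _ (by fun_prop), FF_semi μ y s hy hs]
  rfl


noncomputable def ff (μ : Measure E) (y : ℝ) (x : E) : ℝ := ∫ z, gaussD d y (x - z) ∂μ

lemma gauss_integrable (μ : Measure E) [IsProbabilityMeasure μ] (y : ℝ) (hy : 0 < y) (x : E) :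
    Integrable (fun z => gaussD d y (x - z)) μ := by
  have := gaussD_cont (d := d) y
  refine Integrable.mono' (integrable_const ((2 * π * y) ^ (-(d : ℝ) / 2)))
    (Continuous.aestronglyMeasurable (by fun_prop)) (Filter.Eventually.of_forall fun z => ?_)
  rw [Real.norm_of_nonneg (gaussD_pos y hy _).le, gaussD]
  refine mul_le_of_le_one_right (by positivity) (exp_le_one_iff.2 ?_)
  rw [neg_div]
  have : 0 ≤ ‖x - z‖ ^ 2 / (2 * y) := by positivity
  linarith

lemma FF_eq (μ : Measure E) [IsProbabilityMeasure μ] (y : ℝ) (hy : 0 < y) (x : E) :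
    FF μ y x = ENNReal.ofReal (ff μ y x) := by
  rw [ff, ofReal_integral_eq_lintegral_ofReal (gauss_integrable μ y hy x)
    (Filter.Eventually.of_forall fun _ => (gaussD_pos y hy _).le)]
  rfl

lemma ff_lower (μ : Measure E) [IsProbabilityMeasure μ] (R : ℝ) (hR : ∀ᵐ z ∂μ, ‖z‖ ≤ R)
    (y : ℝ) (hy : 0 < y) (x : E) :
    (2 * π * y) ^ (-(d : ℝ) / 2) * exp (-(‖x‖ ^ 2 + R ^ 2) / y) ≤ ff μ y x := by
  have h := integral_mono_ae (μ := μ) (integrable_const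
    ((2 * π * y) ^ (-(d : ℝ) / 2) * exp (-(‖x‖ ^ 2 + R ^ 2) / y))) (gauss_integrable μ y hy x) ?_
  · simpa [ff] using h
  · filter_upwards [hR] with z hz
    rw [gaussD]
    gcongr ?_ * exp ?_
    rw [div_le_div_iff₀ hy (by positivity)]
    have h1 : ‖x - z‖ ^ 2 ≤ 2 * (‖x‖ ^ 2 + R ^ 2) := by
      have := norm_sub_le x z
      have h0 := norm_nonneg z
      have h3 := norm_nonneg (x - z)
      nlinarith [sq_nonneg (‖x‖ - ‖z‖)]
    nlinarith

lemma ff_upper (μ : Measure E) [IsProbabilityMeasure μ] (R : ℝ) (hR : ∀ᵐ z ∂μ, ‖z‖ ≤ R)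
    (y : ℝ) (hy : 0 < y) (x : E) :
    ff μ y x ≤ (2 * π * y) ^ (-(d : ℝ) / 2) * exp (R ^ 2 / (2 * y) - ‖x‖ ^ 2 / (4 * y)) := by
  have h := integral_mono_ae (μ := μ) (gauss_integrable μ y hy x) (integrable_const
    ((2 * π * y) ^ (-(d : ℝ) / 2) * exp (R ^ 2 / (2 * y) - ‖x‖ ^ 2 / (4 * y)))) ?_
  · simpa [ff] using h
  · filter_upwards [hR] with z hz
    rw [gaussD]
    gcongr ?_ * exp ?_
    have h1 : ‖x‖ ^ 2 / 2 - R ^ 2 ≤ ‖x - z‖ ^ 2 := by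
      have := norm_le_norm_sub_add x z
      have h0 := norm_nonneg z
      have h3 := norm_nonneg x
      nlinarith [sq_nonneg (‖x - z‖ - ‖z‖)]
    have e : R ^ 2 / (2 * y) - ‖x‖ ^ 2 / (4 * y) = (-(‖x‖ ^ 2 / 2 - R ^ 2)) / (2 * y) := by
      field_simp; ring
    rw [e]
    gcongr

lemma ff_pos (μ : Measure E) [IsProbabilityMeasure μ] (R : ℝ) (hR : ∀ᵐ z ∂μ, ‖z‖ ≤ R)
    (y : ℝ) (hy : 0 < y) (x : E) : 0 < ff μ y x :=
  lt_of_lt_of_le (by positivity) (ff_lower μ R hR y hy x)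

lemma ff_meas (μ : Measure E) [IsProbabilityMeasure μ] (R : ℝ) (hR : ∀ᵐ z ∂μ, ‖z‖ ≤ R)
    (y : ℝ) (hy : 0 < y) : Measurable (ff μ y) := by
  have : ff μ y = fun x => (FF μ y x).toReal := by
    ext x
    rw [FF_eq μ y hy, ENNReal.toReal_ofReal (ff_pos μ R hR y hy x).le]
  rw [this]
  exact (FF_meas μ y).ennreal_toReal

lemma log_integrable (μ : Measure E) [IsProbabilityMeasure μ] (R : ℝ) (hR : ∀ᵐ z ∂μ, ‖z‖ ≤ R)
    (y : ℝ) (hy : 0 < y) : Integrable (fun x => log (ff μ y x)) (nu μ y) := by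
  have hm := ff_meas μ R hR y hy
  rw [nu, integrable_withDensity_iff (FF_meas μ y)
    (Filter.Eventually.of_forall fun x => by rw [FF_eq μ y hy]; exact ENNReal.ofReal_lt_top)]
  simp_rw [FF_eq μ y hy, fun x => ENNReal.toReal_ofReal (ff_pos μ R hR y hy x).le]
  set C := (2 * π * y) ^ (-(d : ℝ) / 2) with hC
  have hC0 : 0 < C := by positivity
  set A := |log C| + R ^ 2 / y with hA
  refine Integrable.mono' ((integrable_gexp (1 / (8 * y)) (by positivity)).const_mul
    (C * exp (R ^ 2 / (2 * y)) * (A + 8))) (by fun_prop) (Filter.Eventually.of_forall fun x => ?_)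
  have hp := ff_pos μ R hR y hy x
  have hl := ff_lower μ R hR y hy x
  have hu := ff_upper μ R hR y hy x
  rw [← hC] at hl hu
  have hl' := log_le_log (by positivity) hl
  have hu' := log_le_log hp hu
  rw [log_mul hC0.ne' (exp_pos _).ne', log_exp] at hl' hu'
  have q1 : 0 ≤ R ^ 2 / y := by positivity
  have q2 : 0 ≤ ‖x‖ ^ 2 / y := by positivity
  have e1 : -(‖x‖ ^ 2 + R ^ 2) / y = - (‖x‖ ^ 2 / y) - R ^ 2 / y := by ring
  have e2 : R ^ 2 / (2 * y) - ‖x‖ ^ 2 / (4 * y) = (R ^ 2 / y) / 2 - (‖x‖ ^ 2 / y) / 4 := by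
    field_simp
  have hlog : |log (ff μ y x)| ≤ A + ‖x‖ ^ 2 / y := by
    rw [e1] at hl'
    rw [e2] at hu'
    have a1 := le_abs_self (log C)
    have a2 := neg_abs_le (log C)
    rw [abs_le]
    constructor <;> linarith
  set u := ‖x‖ ^ 2 / y with hudef
  have hexp : A + u ≤ (A + 8) * exp (u / 8) := by
    have := add_one_le_exp (u / 8)
    have hA0 : 0 ≤ A := by positivity
    nlinarith
  rw [norm_mul, Real.norm_eq_abs, Real.norm_of_nonneg hp.le]
  calc |log (ff μ y x)| * ff μ y x ≤ ((A + 8) * exp (u / 8)) *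
        (C * exp (R ^ 2 / (2 * y) - ‖x‖ ^ 2 / (4 * y))) :=
        mul_le_mul (hlog.trans hexp) hu hp.le (by positivity)
    _ = C * (A + 8) * (exp (u / 8) * exp (R ^ 2 / (2 * y) - ‖x‖ ^ 2 / (4 * y))) := by ring
    _ = C * (A + 8) * (exp (R ^ 2 / (2 * y)) * exp (-(1 / (8 * y)) * ‖x‖ ^ 2)) := by
        rw [← exp_add, ← exp_add]
        congr 2
        rw [hudef]; field_simp; ring
    _ = _ := by ring

lemma entG_eq (μ : Measure E) [IsProbabilityMeasure μ] (R : ℝ) (hR : ∀ᵐ z ∂μ, ‖z‖ ≤ R)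
    (y : ℝ) (hy : 0 < y) : entG d μ y = - ∫ x, log (ff μ y x) ∂(nu μ y) := by
  rw [nu, integral_withDensity_eq_integral_toReal_smul (FF_meas μ y)
    (Filter.Eventually.of_forall fun x => by rw [FF_eq μ y hy]; exact ENNReal.ofReal_lt_top),
    ← integral_neg, entG]
  congr 1
  ext x
  rw [FF_eq μ y hy, ENNReal.toReal_ofReal (ff_pos μ R hR y hy x).le, negMulLog, smul_eq_mul,
    neg_mul]
  rfl

lemma log_pull {Ω : Type*} [MeasurableSpace Ω] (M : Measure Ω) (T : Ω → E)
    (μ : Measure E) [IsProbabilityMeasure μ] (R : ℝ) (hR : ∀ᵐ z ∂μ, ‖z‖ ≤ R)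
    (y : ℝ) (hy : 0 < y) (hT : MeasurePreserving T M (nu μ y)) :
    Integrable (fun w => log (ff μ y (T w))) M ∧
      ∫ w, log (ff μ y (T w)) ∂M = - entG d μ y := by
  have hm := ff_meas μ R hR y hy
  have hi := log_integrable μ R hR y hy
  constructor
  · exact hT.integrable_comp_of_integrable hi
  · rw [entG_eq μ R hR y hy, neg_neg, ← hT.map_eq, integral_map hT.measurable.aemeasurable]
    rw [hT.map_eq]; exact hi.1

lemma ent_mono (μ : Measure E) [IsProbabilityMeasure μ] (R : ℝ) (hR : ∀ᵐ z ∂μ, ‖z‖ ≤ R)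
    (y s : ℝ) (hy : 0 < y) (hs : 0 < s) : entG d μ y ≤ entG d μ (y + s) := by
  have := gam_prob (d := d) s hs
  have := nu_prob μ y hy
  have hys : 0 < y + s := by linarith
  have hf1 := ff_meas μ R hR y hy
  have hf2 := ff_meas μ R hR (y + s) hys
  have hF1 := FF_meas μ y
  have hF2 := FF_meas μ (y + s)
  obtain ⟨i1, e1⟩ := log_pull ((nu μ y).prod (gam d s)) _ μ R hR y hy measurePreserving_fst
  obtain ⟨i2, e2⟩ := log_pull _ _ μ R hR (y + s) hys (mp_add μ y s hy hs)
  have h := integral_nonneg_of_exp _ _ (i1.sub i2) ?_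
  · simp only [Pi.sub_apply] at h
    rw [integral_sub i1 i2, e1, e2] at h
    linarith
  · have hr : ∀ w : E × E, ENNReal.ofReal (exp (-((fun w : E × E => log (ff μ y w.1)) -
        (fun w : E × E => log (ff μ (y + s) (w.1 + w.2)))) w)) =
        (FF μ y w.1)⁻¹ * FF μ (y + s) (w.1 + w.2) := by
      intro w
      have p1 := ff_pos μ R hR y hy w.1
      have p2 := ff_pos μ R hR (y + s) hys (w.1 + w.2)
      rw [FF_eq μ y hy, FF_eq μ _ hys, ← ENNReal.ofReal_inv_of_pos p1,
        ← ENNReal.ofReal_mul (by positivity)]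
      congr 1
      simp only [Pi.sub_apply, neg_sub]
      rw [exp_sub, exp_log p1, exp_log p2]
      field_simp
    simp_rw [hr]
    rw [lintegral_prod_symm _ (by fun_prop)]
    have : ∀ a : E, ∫⁻ z, (FF μ y z)⁻¹ * FF μ (y + s) (z + a) ∂(nu μ y) = 1 := by
      intro a
      rw [nu, lintegral_withDensity_eq_lintegral_mul _ hF1 (by fun_prop),
        ← FF_int μ (y + s) hys, ← lintegral_add_right_eq_self (fun x => FF μ (y + s) x) a]
      congr 1
      ext z
      have p1 := ff_pos μ R hR y hy z
      simp only [Pi.mul_apply]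
      rw [← mul_assoc, ENNReal.mul_inv_cancel, one_mul]
      · rw [FF_eq μ y hy]; simpa using p1
      · rw [FF_eq μ y hy]; exact ENNReal.ofReal_ne_top
    simp_rw [this]
    simp

lemma ent_sub (μ : Measure E) [IsProbabilityMeasure μ] (R : ℝ) (hR : ∀ᵐ z ∂μ, ‖z‖ ≤ R)
    (y s t : ℝ) (hy : 0 < y) (hs : 0 < s) (ht : 0 < t) :
    entG d μ (y + s + t) + entG d μ y ≤ entG d μ (y + s) + entG d μ (y + t) := by
  have := gam_prob (d := d) s hs
  have := gam_prob (d := d) t ht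
  have := nu_prob μ y hy
  have hys : 0 < y + s := by linarith
  have hyt : 0 < y + t := by linarith
  have hyst : 0 < y + s + t := by linarith
  have := nu_prob μ (y + s) hys
  have hf1 := ff_meas μ R hR y hy
  have hf2 := ff_meas μ R hR (y + s) hys
  have hf3 := ff_meas μ R hR (y + t) hyt
  have hf4 := ff_meas μ R hR (y + s + t) hyst
  have hF1 := FF_meas μ y
  have hF2 := FF_meas μ (y + s)
  have hF3 := FF_meas μ (y + t)
  have hF4 := FF_meas μ (y + s + t)
  have n0 : ∀ y, 0 < y → ∀ z, FF μ y z ≠ 0 := by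
    intro y hy z
    rw [FF_eq μ y hy]; simpa using ff_pos μ R hR y hy z
  have nt : ∀ y, 0 < y → ∀ z, FF μ y z ≠ ⊤ := by
    intro y hy z
    rw [FF_eq μ y hy]; exact ENNReal.ofReal_ne_top
  set M := ((nu μ y).prod (gam d s)).prod (gam d t) with hM
  have m1 : MeasurePreserving (fun p : (E × E) × E => p.1.1) M (nu μ y) :=
    measurePreserving_fst.comp measurePreserving_fst
  have m2 : MeasurePreserving (fun p : (E × E) × E => p.1.1 + p.1.2) M (nu μ (y + s)) :=
    (mp_add μ y s hy hs).comp measurePreserving_fst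
  have m3 : MeasurePreserving (fun p : (E × E) × E => p.1.1 + p.2) M (nu μ (y + t)) :=
    (mp_add μ y t hy ht).comp
      ((measurePreserving_fst (μ := nu μ y) (ν := gam d s)).prod (MeasurePreserving.id (gam d t)))
  have m4 : MeasurePreserving (fun p : (E × E) × E => p.1.1 + p.1.2 + p.2) M (nu μ (y + s + t)) :=
    (mp_add μ (y + s) t hys ht).comp ((mp_add μ y s hy hs).prod (MeasurePreserving.id (gam d t)))
  obtain ⟨i1, e1⟩ := log_pull _ _ μ R hR y hy m1
  obtain ⟨i2, e2⟩ := log_pull _ _ μ R hR (y + s) hys m2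
  obtain ⟨i3, e3⟩ := log_pull _ _ μ R hR (y + t) hyt m3
  obtain ⟨i4, e4⟩ := log_pull _ _ μ R hR (y + s + t) hyst m4
  have h := integral_nonneg_of_exp M (fun w => (log (ff μ y w.1.1) -
      log (ff μ (y + s) (w.1.1 + w.1.2))) - (log (ff μ (y + t) (w.1.1 + w.2)) -
      log (ff μ (y + s + t) (w.1.1 + w.1.2 + w.2)))) ((i1.sub i2).sub (i3.sub i4)) ?_
  · have q := integral_sub (i1.sub i2) (i3.sub i4)
    simp only [Pi.sub_apply] at q
    rw [q, integral_sub i1 i2, integral_sub i3 i4, e1, e2, e3, e4] at h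
    linarith
  · have hr : ∀ w : (E × E) × E, ENNReal.ofReal (exp (-((log (ff μ y w.1.1) -
      log (ff μ (y + s) (w.1.1 + w.1.2))) - (log (ff μ (y + t) (w.1.1 + w.2)) -
      log (ff μ (y + s + t) (w.1.1 + w.1.2 + w.2)))))) =
        (FF μ y w.1.1)⁻¹ * (FF μ (y + s) (w.1.1 + w.1.2) * FF μ (y + t) (w.1.1 + w.2) *
          (FF μ (y + s + t) (w.1.1 + w.1.2 + w.2))⁻¹) := by
      intro w
      have p1 := ff_pos μ R hR y hy w.1.1
      have p2 := ff_pos μ R hR (y + s) hys (w.1.1 + w.1.2)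
      have p3 := ff_pos μ R hR (y + t) hyt (w.1.1 + w.2)
      have p4 := ff_pos μ R hR (y + s + t) hyst (w.1.1 + w.1.2 + w.2)
      rw [FF_eq μ y hy, FF_eq μ _ hys, FF_eq μ _ hyt, FF_eq μ _ hyst,
        ← ENNReal.ofReal_inv_of_pos p1, ← ENNReal.ofReal_inv_of_pos p4,
        ← ENNReal.ofReal_mul (by positivity), ← ENNReal.ofReal_mul (by positivity),
        ← ENNReal.ofReal_mul (by positivity)]
      congr 1
      rw [neg_sub, exp_sub, exp_sub, exp_sub, exp_log p1, exp_log p2, exp_log p3, exp_log p4]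
      field_simp
    simp_rw [hr]
    rw [hM, lintegral_prod_symm _ (by fun_prop)]
    have step : ∀ b : E, ∫⁻ q : E × E, (FF μ y q.1)⁻¹ * (FF μ (y + s) (q.1 + q.2) *
          FF μ (y + t) (q.1 + b) * (FF μ (y + s + t) (q.1 + q.2 + b))⁻¹)
          ∂((nu μ y).prod (gam d s)) = 1 := by
      intro b
      rw [lintegral_prod_symm _ (by fun_prop)]
      have inner : ∀ a : E, ∫⁻ z, (FF μ y z)⁻¹ * (FF μ (y + s) (z + a) *
          FF μ (y + t) (z + b) * (FF μ (y + s + t) (z + a + b))⁻¹) ∂(nu μ y) =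
          ∫⁻ x, (FF μ (y + s) x * (FF μ (y + s + t) (x + b))⁻¹) * FF μ (y + t) (x + b - a) := by
        intro a
        rw [nu, lintegral_withDensity_eq_lintegral_mul _ hF1 (by fun_prop),
          ← lintegral_add_right_eq_self (fun x => (FF μ (y + s) x *
            (FF μ (y + s + t) (x + b))⁻¹) * FF μ (y + t) (x + b - a)) a]
        congr 1
        ext z
        simp only [Pi.mul_apply]
        rw [← mul_assoc, ENNReal.mul_inv_cancel (n0 y hy z) (nt y hy z), one_mul,
          show z + a + b - a = z + b by abel]
        ring
      simp only [inner]
      rw [lintegral_lintegral_swap (by fun_prop), ← FF_int μ (y + s) hys]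
      congr 1
      ext x
      rw [lintegral_const_mul _ (by fun_prop), FF_semi μ (y + t) s hyt hs,
        show y + t + s = y + s + t by ring, mul_assoc,
        ENNReal.inv_mul_cancel (n0 _ hyst _) (nt _ hyst _), mul_one]
    simp only [step]
    simp

end aux1

theorem statement8 {d : ℕ} (μ : Measure (EuclideanSpace ℝ (Fin d)))
    [IsProbabilityMeasure μ] (K : Set (EuclideanSpace ℝ (Fin d)))
    (hK : IsCompact K) (hμK : μ Kᶜ = 0) :
    MonotoneOn (entG d μ) (Set.Ioi 0) ∧
    (∀ y : ℝ, 0 < y →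
      (∃ D : ℝ, HasDerivWithinAt (entG d μ) D (Set.Ioi y) y) ∧
      (∃ D : ℝ, HasDerivWithinAt (entG d μ) D (Set.Iio y) y)) ∧
    ContinuousOn (entG d μ) (Set.Ioi 0) ∧
    AntitoneOn (fun y => derivWithin (entG d μ) (Set.Ioi y) y) (Set.Ioi 0) ∧
    AntitoneOn (fun y => derivWithin (entG d μ) (Set.Iio y) y) (Set.Ioi 0) := by
  obtain ⟨R, hR'⟩ := hK.isBounded.exists_norm_le
  have hR : ∀ᵐ z ∂μ, ‖z‖ ≤ R := by
    have h : ∀ᵐ z ∂μ, z ∈ K := hμK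
    filter_upwards [h] with z hz using hR' z hz
  have hmono : MonotoneOn (entG d μ) (Set.Ioi 0) := by
    intro a ha b hb hab
    rcases hab.eq_or_lt with h | h
    · rw [h]
    · have := ent_mono μ R hR a (b - a) ha (by linarith)
      simpa using this
  have hc : ConcaveOn ℝ (Set.Ioi 0) (entG d μ) :=
    concave_of_incr _ hmono fun y s t hy hs ht => ent_sub μ R hR y s t hy hs ht
  have hv := hc.neg
  have hI : interior (Set.Ioi (0 : ℝ)) = Set.Ioi 0 := isOpen_Ioi.interior_eq
  refine ⟨hmono, ?_, hc.continuousOn isOpen_Ioi, ?_, ?_⟩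
  · intro y hy
    have hy' : y ∈ interior (Set.Ioi (0 : ℝ)) := by rw [hI]; exact hy
    have h1 := (hv.hasDerivWithinAt_rightDeriv_of_mem_interior hy').neg
    have h2 := (hv.hasDerivWithinAt_leftDeriv_of_mem_interior hy').neg
    rw [neg_neg] at h1 h2
    exact ⟨⟨_, h1⟩, ⟨_, h2⟩⟩
  · intro a ha b hb hab
    have h := hv.monotoneOn_rightDeriv (by rw [hI]; exact ha) (by rw [hI]; exact hb) hab
    simp only [derivWithin.neg] at h
    simpa using h
  · intro a ha b hb hab
    have h := hv.monotoneOn_leftDeriv (by rw [hI]; exact ha) (by rw [hI]; exact hb) hab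
    simp only [derivWithin.neg] at h
    simpa using h
end

section
/- Let μ and ν be absolutely continuous probability measures on ℝ^d with finite differential entropy, and let f : [0,1] → [0,1] be defined by f(δ) = (1/2)(1+δ)log(1+δ) + (1/2)(1−δ)log(1−δ). Then f( (1/2)·‖μ − ν‖₁ ) ≤ H( (μ + ν)/2 ) − (1/2)H(μ) − (1/2)H(ν), where ‖μ − ν‖₁ denotes the total variation norm of the signed measure μ − ν (equal to the L¹ distance of the densities). -/
open MeasureTheory Real

lemma aux_gibbs {p r : ℝ} (hp : 0 ≤ p) (hr : 0 < r) : p - r ≤ p * log p - p * log r := by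
  rcases hp.eq_or_lt with h | h
  · subst h; simp; exact hr.le
  · have := log_le_sub_one_of_pos (div_pos hr h)
    rw [log_div hr.ne' h.ne'] at this
    have h2 := mul_le_mul_of_nonneg_left this h.le
    have h3 : p * (r / p - 1) = r - p := by field_simp
    rw [h3] at h2
    linarith

lemma aux_point {a b t : ℝ} (ha : 0 ≤ a) (hb : 0 ≤ b) (ht0 : 0 ≤ t) (ht : t < 1) :
    a / 2 * log (1 + t) + b / 2 * log (1 - t) ≤
      negMulLog ((a + b) / 2) - 1 / 2 * negMulLog a - 1 / 2 * negMulLog b := by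
  rcases (add_nonneg ha hb).eq_or_lt with h | h
  · have h1 : a = 0 := by linarith
    have h2 : b = 0 := by linarith
    subst h1 h2; simp
  · have hm : 0 < (a + b) / 2 := by linarith
    have h1 : 0 < 1 + t := by linarith
    have h2 : 0 < 1 - t := by linarith
    have e1 := aux_gibbs ha (mul_pos hm h1)
    have e2 := aux_gibbs hb (mul_pos hm h2)
    rw [log_mul hm.ne' h1.ne'] at e1
    rw [log_mul hm.ne' h2.ne'] at e2
    simp only [negMulLog]
    nlinarith

lemma aux_mono {a b : ℝ} (ha : 0 ≤ a) (hb : 0 ≤ b) : a * log a ≤ a * log (a + b) := by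
  rcases ha.eq_or_lt with h | h
  · subst h; simp
  · exact mul_le_mul_of_nonneg_left (log_le_log h (by linarith)) ha

lemma aux_upper {a b : ℝ} (ha : 0 ≤ a) (hb : 0 ≤ b) :
    negMulLog ((a + b) / 2) ≤
      1 / 2 * negMulLog a + 1 / 2 * negMulLog b + (a + b) / 2 * log 2 := by
  rcases (add_nonneg ha hb).eq_or_lt with h | h
  · have h1 : a = 0 := by linarith
    have h2 : b = 0 := by linarith
    subst h1 h2; simp
  · have e1 := aux_mono ha hb
    have e2 := aux_mono hb ha
    rw [add_comm b a] at e2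
    simp only [negMulLog]
    rw [log_div h.ne' two_ne_zero]
    nlinarith



theorem statement10 {d : ℕ} (f g : EuclideanSpace ℝ (Fin d) → ℝ)
    (hfm : Measurable f) (hgm : Measurable g)
    (hf0 : ∀ x, 0 ≤ f x) (hg0 : ∀ x, 0 ≤ g x)
    (hfi : Integrable f) (hgi : Integrable g)
    (hf1 : ∫ x, f x = 1) (hg1 : ∫ x, g x = 1)
    (hfent : Integrable (fun x => Real.negMulLog (f x)))
    (hgent : Integrable (fun x => Real.negMulLog (g x))) :
    (fun δ : ℝ => 1 / 2 * (1 + δ) * Real.log (1 + δ) + 1 / 2 * (1 - δ) * Real.log (1 - δ))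
        (1 / 2 * ∫ x, |f x - g x|) ≤
      (∫ x, Real.negMulLog ((f x + g x) / 2)) - 1 / 2 * (∫ x, Real.negMulLog (f x)) -
        1 / 2 * ∫ x, Real.negMulLog (g x) := by

  have hL : Integrable (fun x => 1 / 2 * negMulLog (f x) + 1 / 2 * negMulLog (g x)) :=
    (hfent.const_mul _).add (hgent.const_mul _)
  have hU : Integrable (fun x => 1 / 2 * negMulLog (f x) + 1 / 2 * negMulLog (g x)
      + (f x + g x) / 2 * log 2) :=
    hL.add (((hfi.add hgi).div_const 2).mul_const _)
  have hM : Integrable (fun x => negMulLog ((f x + g x) / 2)) := by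
    refine integrable_of_le_of_le ?_ (Filter.Eventually.of_forall fun x => ?_)
      (Filter.Eventually.of_forall fun x => aux_upper (hf0 x) (hg0 x)) hL hU
    · exact (continuous_negMulLog.measurable.comp
        ((hfm.add hgm).div_const 2)).aestronglyMeasurable
    · have := aux_point (hf0 x) (hg0 x) le_rfl zero_lt_one
      simp only [add_zero, sub_zero, log_one, mul_zero] at this
      linarith
  have hD : Integrable (fun x => |f x - g x|) := (hfi.sub hgi).abs
  set D := ∫ x, |f x - g x| with hDdef
  have hS : ∫ x, (f x + g x) = 2 := by
    rw [integral_add hfi hgi, hf1, hg1]; norm_num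
  have hD0 : 0 ≤ D := integral_nonneg fun x => abs_nonneg _
  have hD2 : D ≤ 2 := by
    rw [← hS]
    refine integral_mono hD (hfi.add hgi) fun x => ?_
    have := hf0 x
    have := hg0 x
    exact abs_le.2 ⟨by simp only [Pi.add_apply]; linarith, by simp only [Pi.add_apply]; linarith⟩
  set R := (∫ x, Real.negMulLog ((f x + g x) / 2)) - 1 / 2 * (∫ x, Real.negMulLog (f x)) -
        1 / 2 * ∫ x, Real.negMulLog (g x) with hR
  have key : ∀ t : ℝ, 0 ≤ t → t < 1 →
      1 / 2 * (1 + 1 / 2 * D) * log (1 + t) + 1 / 2 * (1 - 1 / 2 * D) * log (1 - t) ≤ R := by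
    intro t ht0 ht
    have hRe : R = ∫ x, (negMulLog ((f x + g x) / 2) - 1 / 2 * negMulLog (f x)
        - 1 / 2 * negMulLog (g x)) := by
      have hMf : Integrable (fun x => negMulLog ((f x + g x) / 2) - 1 / 2 * negMulLog (f x)) :=
        hM.sub (hfent.const_mul _)
      rw [integral_sub hMf (hgent.const_mul _),
        integral_sub hM (hfent.const_mul _), integral_const_mul, integral_const_mul]
    have hiA : Integrable (fun x => (f x + g x) * ((log (1 + t) + log (1 - t)) / 4)) :=
      (hfi.add hgi).mul_const _
    have hiB : Integrable (fun x => |f x - g x| * ((log (1 + t) - log (1 - t)) / 4)) :=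
      hD.mul_const _
    have hLe : 1 / 2 * (1 + 1 / 2 * D) * log (1 + t) + 1 / 2 * (1 - 1 / 2 * D) * log (1 - t)
        = ∫ x, ((f x + g x) * ((log (1 + t) + log (1 - t)) / 4)
          + |f x - g x| * ((log (1 + t) - log (1 - t)) / 4)) := by
      rw [integral_add hiA hiB, integral_mul_const, integral_mul_const, hS, ← hDdef]
      ring
    rw [hRe, hLe]
    refine integral_mono (hiA.add hiB)
      ((hM.sub (hfent.const_mul _)).sub (hgent.const_mul _)) fun x => ?_
    simp only [Pi.add_apply, Pi.sub_apply]
    rcases le_total (g x) (f x) with h | h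
    · rw [abs_of_nonneg (sub_nonneg.2 h)]
      have := aux_point (hf0 x) (hg0 x) ht0 ht
      linarith
    · rw [abs_of_nonpos (sub_nonpos.2 h)]
      have := aux_point (hg0 x) (hf0 x) ht0 ht
      rw [add_comm (g x)] at this
      linarith
  show 1 / 2 * (1 + 1 / 2 * D) * log (1 + 1 / 2 * D)
    + 1 / 2 * (1 - 1 / 2 * D) * log (1 - 1 / 2 * D) ≤ R
  rcases hD2.lt_or_eq with h | h
  · exact key _ (by linarith) (by linarith)
  · rw [h] at key ⊢
    have hc : Filter.Tendsto (fun t : ℝ => log (1 + t)) (nhdsWithin 1 (Set.Iio 1))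
        (nhds (log (1 + 1))) := by
      have : ContinuousAt (fun t : ℝ => log (1 + t)) 1 :=
        ContinuousAt.log (by fun_prop) (by norm_num)
      exact this.tendsto.mono_left nhdsWithin_le_nhds
    have h2 : log (1 + 1) ≤ R := by
      refine le_of_tendsto hc ?_
      filter_upwards [Ioo_mem_nhdsLT (zero_lt_one (α := ℝ))] with t ht
      have := key t ht.1.le ht.2
      norm_num at this
      exact this
    norm_num at h2 ⊢
    exact h2
end

section
/- Let n ∈ ℕ, let μ be an absolutely continuous probability measure on ℝ^d with finite differential entropy, and let t ∈ ℝ^d. For k ≥ 0 let B_k^{(t)} denote the k-fold convolution of the measure (1/2)(δ_t + δ_{−t}) (with B_0^{(t)} = δ_0), and let f(δ) = (1/2)(1+δ)log(1+δ) + (1/2)(1−δ)log(1−δ) for δ ∈ [0,1]. Then ∑_{k=0}^{n−1} f( (1/2)·‖ μ * B_k^{(t)} * (δ_t − δ_{−t}) ‖₁ ) ≤ H( μ * B_n^{(t)} ) − H(μ). -/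
open MeasureTheory Real

/-- The density of `μ * B_k^{(t)}`, where `μ` has density `g` and `B_k^{(t)}` is the `k`-fold
convolution of `(δ_t + δ_{-t})/2`. -/
noncomputable def densBk {d : ℕ} (g : EuclideanSpace ℝ (Fin d) → ℝ)
    (t : EuclideanSpace ℝ (Fin d)) (k : ℕ) (x : EuclideanSpace ℝ (Fin d)) : ℝ :=
  (2 : ℝ) ^ (-(k : ℤ)) * ∑ ε : Fin k → Bool,
    g (x - (∑ i, if ε i then (1 : ℝ) else -1) • t)

lemma densBk_zero_aux {d : ℕ} (g : EuclideanSpace ℝ (Fin d) → ℝ)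
    (t : EuclideanSpace ℝ (Fin d)) : densBk g t 0 = g := by
  funext x
  simp [densBk]

lemma densBk_succ_aux {d : ℕ} (g : EuclideanSpace ℝ (Fin d) → ℝ)
    (t : EuclideanSpace ℝ (Fin d)) (k : ℕ) (x : EuclideanSpace ℝ (Fin d)) :
    densBk g t (k + 1) x = (densBk g t k (x - t) + densBk g t k (x + t)) / 2 := by
  unfold densBk
  rw [← (Fin.consEquiv (fun _ : Fin (k + 1) => Bool)).sum_comp, Fintype.sum_prod_type]
  rw [Fintype.sum_bool]
  simp only [Fin.consEquiv_apply, Fin.sum_univ_succ, Fin.cons_zero, Fin.cons_succ, if_true,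
    Bool.false_eq_true, if_false]
  have h1 : ∀ s : ℝ, x - (1 + s) • t = x - t - s • t := by
    intro s; rw [add_smul, one_smul]; abel
  have h2 : ∀ s : ℝ, x - (-1 + s) • t = x + t - s • t := by
    intro s; rw [add_smul, neg_smul, one_smul]; abel
  simp only [h1, h2]
  have h3 : (2 : ℝ) ^ (-((k + 1 : ℕ) : ℤ)) = 2 ^ (-(k : ℤ)) / 2 := by
    push_cast
    rw [neg_add, zpow_add₀ (by norm_num)]
    norm_num
    ring
  rw [h3]
  ring

lemma xlog_aux (x y : ℝ) (hx : 0 ≤ x) (hy : 0 ≤ y) (h : y = 0 → x = 0) :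
    x - y ≤ x * log x - x * log y := by
  rcases hx.eq_or_lt with h0 | h0
  · subst h0; simpa using hy
  · have hy' : 0 < y := by
      rcases hy.eq_or_lt with h1 | h1
      · exact absurd (h h1.symm) h0.ne'
      · exact h1
    have := Real.log_le_sub_one_of_pos (div_pos hy' h0)
    rw [Real.log_div hy'.ne' h0.ne'] at this
    have h2 := mul_le_mul_of_nonneg_left this h0.le
    have h3 : x * (y / x - 1) = y - x := by field_simp
    nlinarith

/-- the pointwise inequality -/
lemma ptw_aux (u v c : ℝ) (hu : 0 ≤ u) (hv : 0 ≤ v) (hc0 : 0 ≤ c) (hc1 : c ≤ 1)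
    (h : c = 1 → v = 0) :
    1 / 2 * u * log (1 + c) + 1 / 2 * v * log (1 - c) ≤
      negMulLog ((u + v) / 2) - (negMulLog u + negMulLog v) / 2 := by
  unfold negMulLog
  rcases (add_nonneg hu hv).eq_or_lt with h0 | h0
  · have hu0 : u = 0 := by linarith
    have hv0 : v = 0 := by linarith
    subst hu0; subst hv0; simp
  · have hq : 0 < (u + v) / 2 := by linarith
    have e1 := xlog_aux u ((u + v) / 2 * (1 + c)) hu (by positivity)
      (fun h => absurd h (by positivity))
    rw [Real.log_mul hq.ne' (by linarith)] at e1
    by_cases hc : c = 1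
    · have hv0 := h hc
      subst hc; subst hv0
      norm_num at *
      nlinarith
    · have hc2 : 0 < 1 - c := by
        have := lt_of_le_of_ne hc1 hc
        linarith
      have e2 := xlog_aux v ((u + v) / 2 * (1 - c)) hv (by positivity)
        (fun h => absurd h (by positivity))
      rw [Real.log_mul hq.ne' hc2.ne'] at e2
      nlinarith

lemma upper_aux (a b : ℝ) (ha : 0 ≤ a) (hb : 0 ≤ b) :
    negMulLog ((a + b) / 2) ≤ (negMulLog a + negMulLog b) / 2 + (a + b) / 2 * log 2 := by
  have key : ∀ x y : ℝ, 0 ≤ x → 0 ≤ y → x * log x - x * log 2 ≤ x * log ((x + y) / 2) := by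
    intro x y hx hy
    rcases hx.eq_or_lt with h0 | h0
    · subst h0; simp
    · rw [← mul_sub, ← Real.log_div h0.ne' (by norm_num)]
      exact mul_le_mul_of_nonneg_left (Real.log_le_log (by positivity) (by linarith)) hx
  have k1 := key a b ha hb
  have k2 := key b a hb ha
  rw [add_comm b a] at k2
  unfold negMulLog
  linarith

lemma step_aux {d : ℕ} (p : EuclideanSpace ℝ (Fin d) → ℝ)
    (t : EuclideanSpace ℝ (Fin d))
    (hgm : Measurable p) (hg0 : ∀ x, 0 ≤ p x) (hgi : Integrable p) (hg1 : ∫ x, p x = 1)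
    (hgent : Integrable (fun x => Real.negMulLog (p x)))
    (q : EuclideanSpace ℝ (Fin d) → ℝ) (hq : ∀ x, q x = (p (x - t) + p (x + t)) / 2) :
    Measurable q ∧ (∀ x, 0 ≤ q x) ∧ Integrable q ∧ (∫ x, q x = 1) ∧
    Integrable (fun x => Real.negMulLog (q x)) ∧
    (fun δ : ℝ => 1 / 2 * (1 + δ) * Real.log (1 + δ) + 1 / 2 * (1 - δ) * Real.log (1 - δ))
          (1 / 2 * ∫ x, |p (x - t) - p (x + t)|) ≤
      (∫ x, Real.negMulLog (q x)) - ∫ x, Real.negMulLog (p x) := by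
  obtain rfl : q = fun x => (p (x - t) + p (x + t)) / 2 := funext hq
  have ia : Integrable (fun x => p (x - t)) := hgi.comp_sub_right t
  have ib : Integrable (fun x => p (x + t)) := hgi.comp_add_right t
  have ja : Integrable (fun x => negMulLog (p (x - t))) := hgent.comp_sub_right t
  have jb : Integrable (fun x => negMulLog (p (x + t))) := hgent.comp_add_right t
  have va : ∫ x, p (x - t) = 1 := by rw [integral_sub_right_eq_self p t, hg1]
  have vb : ∫ x, p (x + t) = 1 := by rw [integral_add_right_eq_self p t, hg1]
  have wa : ∫ x, negMulLog (p (x - t)) = ∫ x, negMulLog (p x) :=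
    integral_sub_right_eq_self (fun x => negMulLog (p x)) t
  have wb : ∫ x, negMulLog (p (x + t)) = ∫ x, negMulLog (p x) :=
    integral_add_right_eq_self (fun x => negMulLog (p x)) t
  have ma : Measurable (fun x => p (x - t)) := hgm.comp (measurable_id.sub_const t)
  have mb : Measurable (fun x => p (x + t)) := hgm.comp (measurable_id.add_const t)
  have mq : Measurable (fun x => (p (x - t) + p (x + t)) / 2) := (ma.add mb).div_const 2
  have iq : Integrable (fun x => (p (x - t) + p (x + t)) / 2) := (ia.add ib).div_const 2
  have vq : ∫ x, (p (x - t) + p (x + t)) / 2 = 1 := by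
    rw [integral_div, integral_add ia ib, va, vb]; norm_num
  have javg : Integrable (fun x => (negMulLog (p (x - t)) + negMulLog (p (x + t))) / 2) :=
    (ja.add jb).div_const 2
  have jq : Integrable (fun x => negMulLog ((p (x - t) + p (x + t)) / 2)) := by
    refine integrable_of_le_of_le
      (f := fun x => negMulLog ((p (x - t) + p (x + t)) / 2))
      (Real.continuous_negMulLog.measurable.comp mq).aestronglyMeasurable
      (g₁ := fun x => (negMulLog (p (x - t)) + negMulLog (p (x + t))) / 2)
      (g₂ := fun x => (negMulLog (p (x - t)) + negMulLog (p (x + t))) / 2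
        + (p (x - t) + p (x + t)) / 2 * log 2) ?_ ?_ javg (javg.add (iq.mul_const _))
    · refine Filter.Eventually.of_forall fun x => ?_
      have := ptw_aux (p (x - t)) (p (x + t)) 0 (hg0 _) (hg0 _) le_rfl zero_le_one (by simp)
      simp at this
      simpa using this
    · exact Filter.Eventually.of_forall fun x => upper_aux _ _ (hg0 _) (hg0 _)
  refine ⟨mq, fun x => by have := hg0 (x - t); have := hg0 (x + t); positivity, iq, vq, jq, ?_⟩
  have iabs : Integrable (fun x => |p (x - t) - p (x + t)|) := (ia.sub ib).abs
  set I := ∫ x, |p (x - t) - p (x + t)| with hI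
  have hI0 : 0 ≤ I := integral_nonneg fun x => abs_nonneg _
  have imax : Integrable (fun x => max (p (x - t)) (p (x + t))) := ia.sup ib
  have imin : Integrable (fun x => min (p (x - t)) (p (x + t))) := ia.inf ib
  have vmax : ∫ x, max (p (x - t)) (p (x + t)) = 1 + 1 / 2 * I := by
    have : (fun x => max (p (x - t)) (p (x + t))) = fun x =>
        (p (x - t) + p (x + t)) / 2 + |p (x - t) - p (x + t)| / 2 := by
      funext x
      have := max_sub_min_eq_abs (p (x - t)) (p (x + t))
      rw [abs_sub_comm] at this
      have := max_add_min (p (x - t)) (p (x + t))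
      linarith
    rw [this, integral_add iq (iabs.div_const 2), vq, integral_div, ← hI]
    ring
  have vmin : ∫ x, min (p (x - t)) (p (x + t)) = 1 - 1 / 2 * I := by
    have : (fun x => min (p (x - t)) (p (x + t))) = fun x =>
        (p (x - t) + p (x + t)) / 2 - |p (x - t) - p (x + t)| / 2 := by
      funext x
      have := max_sub_min_eq_abs (p (x - t)) (p (x + t))
      rw [abs_sub_comm] at this
      have := max_add_min (p (x - t)) (p (x + t))
      linarith
    rw [this, integral_sub iq (iabs.div_const 2), vq, integral_div, ← hI]
    ring
  have min0 : ∀ x, 0 ≤ min (p (x - t)) (p (x + t)) := fun x => le_min (hg0 _) (hg0 _)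
  have hmin0 : 0 ≤ 1 - 1 / 2 * I := vmin ▸ integral_nonneg min0
  set c := 1 / 2 * I with hc
  have hc0 : 0 ≤ c := by positivity
  have hae : ∀ᵐ x : EuclideanSpace ℝ (Fin d), c = 1 → min (p (x - t)) (p (x + t)) = 0 := by
    by_cases h1 : c = 1
    · rw [h1, sub_self, integral_eq_zero_iff_of_nonneg min0 imin] at vmin
      filter_upwards [vmin] with x hx _ using hx
    · exact Filter.Eventually.of_forall fun x h => absurd h h1
  have main : ∫ x, (1 / 2 * max (p (x - t)) (p (x + t)) * log (1 + c)
        + 1 / 2 * min (p (x - t)) (p (x + t)) * log (1 - c)) ≤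
      ∫ x, (negMulLog ((p (x - t) + p (x + t)) / 2)
        - (negMulLog (p (x - t)) + negMulLog (p (x + t))) / 2) := by
    refine integral_mono_ae (((imax.const_mul _).mul_const _).add
      ((imin.const_mul _).mul_const _)) (jq.sub javg) ?_
    filter_upwards [hae] with x hx
    have := ptw_aux (max (p (x - t)) (p (x + t))) (min (p (x - t)) (p (x + t))) c
      ((hg0 _).trans (le_max_left _ _)) (min0 x) hc0 (by linarith) hx
    rw [max_add_min] at this
    have e : negMulLog (max (p (x - t)) (p (x + t))) + negMulLog (min (p (x - t)) (p (x + t)))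
        = negMulLog (p (x - t)) + negMulLog (p (x + t)) := by
      rcases le_total (p (x - t)) (p (x + t)) with h | h
      · rw [max_eq_right h, min_eq_left h, add_comm]
      · rw [max_eq_left h, min_eq_right h]
    rw [e] at this
    exact this
  rw [integral_add ((imax.const_mul _).mul_const _) ((imin.const_mul _).mul_const _),
    integral_mul_const, integral_mul_const, integral_const_mul, integral_const_mul, vmax, vmin,
    integral_sub jq javg, integral_div, integral_add ja jb, wa, wb] at main
  linarith

lemma total_aux {d : ℕ} (n : ℕ) (g : EuclideanSpace ℝ (Fin d) → ℝ)
    (t : EuclideanSpace ℝ (Fin d))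
    (hgm : Measurable g) (hg0 : ∀ x, 0 ≤ g x) (hgi : Integrable g) (hg1 : ∫ x, g x = 1)
    (hgent : Integrable (fun x => Real.negMulLog (g x))) :
    Measurable (densBk g t n) ∧ (∀ x, 0 ≤ densBk g t n x) ∧ Integrable (densBk g t n) ∧
    (∫ x, densBk g t n x = 1) ∧
    Integrable (fun x => Real.negMulLog (densBk g t n x)) ∧
    ∑ k ∈ Finset.range n,
        (fun δ : ℝ => 1 / 2 * (1 + δ) * Real.log (1 + δ) + 1 / 2 * (1 - δ) * Real.log (1 - δ))
          (1 / 2 * ∫ x, |densBk g t k (x - t) - densBk g t k (x + t)|) ≤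
      (∫ x, Real.negMulLog (densBk g t n x)) - ∫ x, Real.negMulLog (g x) := by
  induction n with
  | zero =>
    rw [densBk_zero_aux]
    exact ⟨hgm, hg0, hgi, hg1, hgent, by simp⟩
  | succ n ih =>
    obtain ⟨h1, h2, h3, h4, h5, h6⟩ := ih
    obtain ⟨k1, k2, k3, k4, k5, k6⟩ := step_aux (densBk g t n) t h1 h2 h3 h4 h5
      (densBk g t (n + 1)) (densBk_succ_aux g t n)
    refine ⟨k1, k2, k3, k4, k5, ?_⟩
    rw [Finset.sum_range_succ]
    linarith

theorem statement11 {d : ℕ} (n : ℕ) (g : EuclideanSpace ℝ (Fin d) → ℝ)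
    (t : EuclideanSpace ℝ (Fin d))
    (hgm : Measurable g) (hg0 : ∀ x, 0 ≤ g x) (hgi : Integrable g) (hg1 : ∫ x, g x = 1)
    (hgent : Integrable (fun x => Real.negMulLog (g x))) :
    ∑ k ∈ Finset.range n,
        (fun δ : ℝ => 1 / 2 * (1 + δ) * Real.log (1 + δ) + 1 / 2 * (1 - δ) * Real.log (1 - δ))
          (1 / 2 * ∫ x, |densBk g t k (x - t) - densBk g t k (x + t)|) ≤
      (∫ x, Real.negMulLog (densBk g t n x)) - ∫ x, Real.negMulLog (g x) := by
  exact (total_aux n g t hgm hg0 hgi hg1 hgent).2.2.2.2.2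
end

section
/- Let d ∈ ℕ, r₁ > 0, and let μ be a probability measure on ℝ^d with density f such that: (1) there exist C, ε > 0 with f(x) ≤ C·e^{−ε|x|²} for all x; (2) f is twice differentiable; (3) f and ∂f/∂x₁ are bounded and Lipschitz; (4) the function x ↦ sup_{y ∈ B₁(x)} |∂²f/∂y₁²(y)| is in L¹(ℝ^d). For y > 0 let μ_y denote the convolution of μ with the law of (√y·Z, 0, …, 0) where Z is a standard one-dimensional normal random variable (i.e. the centered degenerate Gaussian with covariance matrix y·e₁e₁ᵀ). Then (1/2) ∫_0^{r₁²} ‖ ∂/∂x₁ (density of μ_y) ‖₁² dy ≤ H(μ_{r₁²}) − H(μ). -/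
open MeasureTheory Real


/-- The density of the convolution of the measure with density `f` with the law of
`(√y Z, 0, …, 0)`, `Z` a standard normal. -/
noncomputable def densConv1 {d : ℕ} (f : EuclideanSpace ℝ (Fin d) → ℝ)
    (e₁ : EuclideanSpace ℝ (Fin d)) (y : ℝ) (x : EuclideanSpace ℝ (Fin d)) : ℝ :=
  ∫ s : ℝ, f (x - s • e₁) * ((2 * Real.pi * y) ^ (-(1 : ℝ) / 2) * Real.exp (-s ^ 2 / (2 * y)))

section aux

set_option linter.unusedSectionVars false
set_option linter.unusedVariables false

open Filter Topology ProbabilityTheory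

variable {E : Type*} [NormedAddCommGroup E] [InnerProductSpace ℝ E] [FiniteDimensional ℝ E]
  [MeasurableSpace E] [BorelSpace E]

/-- Gaussian average of `h` along direction `e`. -/
noncomputable def gavg (h : E → ℝ) (e : E) (s : ℝ) (x : E) : ℝ :=
  ∫ z, h (x - (s * z) • e) ∂(gaussianReal 0 1)

lemma gavg_zero (h : E → ℝ) (e x : E) : gavg h e 0 x = h x := by
  simp [gavg]

lemma gavg_int_bdd {h : E → ℝ} (hm : Measurable h) {B : ℝ} (hB : ∀ x, |h x| ≤ B) (e x : E)
    (s : ℝ) : Integrable (fun z => h (x - (s * z) • e)) (gaussianReal 0 1) := by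
  refine Integrable.of_bound (C := B) ?_ (ae_of_all _ fun z => hB _)
  exact (hm.comp (by fun_prop)).aestronglyMeasurable

lemma gavg_bdd {h : E → ℝ} {B : ℝ} (hB : ∀ x, |h x| ≤ B) (e x : E)
    (s : ℝ) : |gavg h e s x| ≤ B := by
  have := norm_integral_le_of_norm_le_const (μ := gaussianReal 0 1)
    (f := fun z => h (x - (s * z) • e)) (C := B) (ae_of_all _ fun z => hB _)
  simpa [gavg] using this

lemma gavg_nonneg {h : E → ℝ} (h0 : ∀ x, 0 ≤ h x) (e x : E)
    (s : ℝ) : 0 ≤ gavg h e s x := integral_nonneg fun z => h0 _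

lemma gavg_hasFDerivAt {h : E → ℝ} (hd : Differentiable ℝ h) {B : ℝ} (hB : ∀ x, |h x| ≤ B)
    {L : NNReal} (hL : LipschitzWith L h) (e x : E) (s : ℝ) :
    Integrable (fun z => fderiv ℝ h (x - (s * z) • e)) (gaussianReal 0 1) ∧
    HasFDerivAt (gavg h e s) (∫ z, fderiv ℝ h (x - (s * z) • e) ∂(gaussianReal 0 1)) x := by
  have hm : Measurable h := hd.continuous.measurable
  refine hasFDerivAt_integral_of_dominated_loc_of_lip' (s := Set.univ) (bound := fun _ => (L : ℝ))
    univ_mem ?_ ?_ ?_ ?_ ?_ ?_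
  · intro y _
    exact (hm.comp (by fun_prop)).aestronglyMeasurable
  · exact gavg_int_bdd hm hB e x s
  · exact ((measurable_fderiv ℝ h).comp (by fun_prop)).aestronglyMeasurable
  · refine ae_of_all _ fun z y _ => ?_
    have := hL.norm_sub_le (y - (s * z) • e) (x - (s * z) • e)
    simpa using this
  · exact integrable_const _
  · refine ae_of_all _ fun z => ?_
    have := (hd (x - (s * z) • e)).hasFDerivAt
    have h3 := this.comp x ((hasFDerivAt_id x).sub_const ((s * z) • e))
    simpa using! h3

lemma gavg_fderiv {h : E → ℝ} (hd : Differentiable ℝ h) {B : ℝ} (hB : ∀ x, |h x| ≤ B)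
    {L : NNReal} (hL : LipschitzWith L h) (e x : E) (s : ℝ) :
    fderiv ℝ (gavg h e s) x e = gavg (fun w => fderiv ℝ h w e) e s x := by
  obtain ⟨h1, h2⟩ := gavg_hasFDerivAt hd hB hL e x s
  rw [h2.fderiv, ContinuousLinearMap.integral_apply h1]
  rfl

lemma gavg_differentiable {h : E → ℝ} (hd : Differentiable ℝ h) {B : ℝ} (hB : ∀ x, |h x| ≤ B)
    {L : NNReal} (hL : LipschitzWith L h) (e : E) (s : ℝ) :
    Differentiable ℝ (gavg h e s) := fun x =>
  (gavg_hasFDerivAt hd hB hL e x s).2.differentiableAt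

lemma line_hasDerivAt {h : E → ℝ} (hd : Differentiable ℝ h) (e x : E) (t : ℝ) :
    HasDerivAt (fun t : ℝ => h (x - t • e)) (-(fderiv ℝ h (x - t • e) e)) t := by
  have h1 : HasDerivAt (fun t : ℝ => x - t • e) (-e) t := by
    simpa using ((hasDerivAt_id t).smul_const e).const_sub x
  have := (hd (x - t • e)).hasFDerivAt.comp_hasDerivAt t h1
  exact this.congr_deriv (by simp)

lemma gavg_hasDerivAt {h : E → ℝ} (hd : Differentiable ℝ h) {B : ℝ} (hB : ∀ x, |h x| ≤ B)
    {B' : ℝ} {e : E} (hB' : ∀ x, |fderiv ℝ h x e| ≤ B') (x : E) (s : ℝ) :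
    HasDerivAt (fun s => gavg h e s x)
      (∫ z, -(z * fderiv ℝ h (x - (s * z) • e) e) ∂(gaussianReal 0 1)) s := by
  have hm : Measurable h := hd.continuous.measurable
  refine (hasDerivAt_integral_of_dominated_loc_of_deriv_le (s := Set.univ)
    (F := fun s z => h (x - (s * z) • e))
    (F' := fun s z => -(z * fderiv ℝ h (x - (s * z) • e) e))
    (bound := fun z => |z| * B')
    univ_mem ?_ ?_ ?_ ?_ ?_ ?_).2
  · exact Eventually.of_forall fun s => (hm.comp (by fun_prop)).aestronglyMeasurable
  · exact gavg_int_bdd hm hB e x s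
  · have : Measurable fun z : ℝ => fderiv ℝ h (x - (s * z) • e) e :=
      (measurable_fderiv_apply_const ℝ h e).comp (by fun_prop)
    exact (measurable_id.mul this).neg.aestronglyMeasurable
  · refine ae_of_all _ fun z y _ => ?_
    rw [norm_neg, norm_mul, Real.norm_eq_abs, Real.norm_eq_abs]
    gcongr
    exact hB' _
  · refine Integrable.mul_const ?_ _
    have := (memLp_id_gaussianReal (μ := 0) (v := 1) 1).integrable (by simp)
    simpa using this.norm
  · refine ae_of_all _ fun z y _ => ?_
    have h2 : HasDerivAt (fun y : ℝ => y * z) z y := by simpa using (hasDerivAt_id y).mul_const z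
    have := (line_hasDerivAt hd e x (y * z)).comp y h2
    exact this.congr_deriv (by ring)

lemma gauss_pdf_deriv (z : ℝ) :
    HasDerivAt (gaussianPDFReal 0 1) (-(z * gaussianPDFReal 0 1 z)) z := by
  have : (gaussianPDFReal 0 1) = fun z : ℝ => (√(2 * π))⁻¹ * Real.exp (-z ^ 2 / 2) := by
    ext z; simp [gaussianPDFReal]
  rw [this]
  have h1 : HasDerivAt (fun z : ℝ => -z ^ 2 / 2) (-z) z := by
    have := ((hasDerivAt_pow 2 z).neg).div_const 2
    exact this.congr_deriv (by simp; ring)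
  exact ((h1.exp).const_mul ((√(2 * π))⁻¹)).congr_deriv (by ring)

lemma int_gauss (g : ℝ → ℝ) :
    ∫ z, g z ∂(gaussianReal 0 1) = ∫ z, g z * gaussianPDFReal 0 1 z := by
  rw [integral_gaussianReal_eq_integral_smul (by simp)]
  simp [mul_comm]

lemma integrable_gauss {g : ℝ → ℝ} (hg : Integrable g (gaussianReal 0 1)) :
    Integrable (fun z => g z * gaussianPDFReal 0 1 z) := by
  rw [gaussianReal_of_var_ne_zero _ (by simp)] at hg
  rw [integrable_withDensity_iff (measurable_gaussianPDF _ _)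
    (ae_of_all _ fun z => ENNReal.ofReal_lt_top)] at hg
  refine hg.congr (ae_of_all _ fun z => ?_)
  simp [toReal_gaussianPDF]

lemma stein {k : E → ℝ} (hd : Differentiable ℝ k) {B : ℝ} (hB : ∀ x, |k x| ≤ B)
    {B' : ℝ} {e : E} (hB' : ∀ x, |fderiv ℝ k x e| ≤ B') (x : E) (s : ℝ) :
    ∫ z, -(z * k (x - (s * z) • e)) ∂(gaussianReal 0 1)
      = s * gavg (fun w => fderiv ℝ k w e) e s x := by
  have hm : Measurable k := hd.continuous.measurable
  have hm' : Measurable (fun w => fderiv ℝ k w e) := measurable_fderiv_apply_const ℝ k e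
  have hid : Integrable (fun z : ℝ => z) (gaussianReal 0 1) :=
    (memLp_id_gaussianReal (μ := 0) (v := 1) 1).integrable (by simp)
  have i1 := gavg_int_bdd hm hB e x s
  have i2 := gavg_int_bdd hm' hB' e x s
  have i3 : Integrable (fun z => -(z * k (x - (s * z) • e))) (gaussianReal 0 1) := by
    refine Integrable.neg (hid.mul_bdd (c := B) i1.aestronglyMeasurable (ae_of_all _ fun z => hB _))
  have hder : ∀ z : ℝ, HasDerivAt (fun z => k (x - (s * z) • e))
      (-(s * fderiv ℝ k (x - (s * z) • e) e)) z := by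
    intro z
    have h2 : HasDerivAt (fun y : ℝ => s * y) s z := by simpa using (hasDerivAt_id z).const_mul s
    have := (line_hasDerivAt hd e x (s * z)).comp z h2
    exact this.congr_deriv (by ring)
  have := integral_mul_deriv_eq_deriv_mul_of_integrable (u := fun z => k (x - (s * z) • e))
    (v := gaussianPDFReal 0 1) (fun z _ => hder z) (fun z _ => gauss_pdf_deriv z)
    ((integrable_gauss i3).congr (ae_of_all _ fun z => by simp; ring))
    ((integrable_gauss (i2.const_mul s).neg).congr (ae_of_all _ fun z => by simp))
    (integrable_gauss i1)
  rw [int_gauss, gavg, int_gauss, ← integral_const_mul]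
  calc _ = ∫ z, k (x - (s * z) • e) * -(z * gaussianPDFReal 0 1 z) := by
        congr 1; ext z; ring
    _ = _ := this
    _ = _ := by
      rw [← integral_neg]; congr 1; ext z; ring

lemma gavg_hasDerivAt' {h : E → ℝ} (hd : Differentiable ℝ h) {B : ℝ} (hB : ∀ x, |h x| ≤ B)
    {B' B'' : ℝ} {e : E} (hB' : ∀ x, |fderiv ℝ h x e| ≤ B')
    (hd' : Differentiable ℝ (fun w => fderiv ℝ h w e))
    (hB'' : ∀ x, |fderiv ℝ (fun w => fderiv ℝ h w e) x e| ≤ B'') (x : E) (s : ℝ) :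
    HasDerivAt (fun s => gavg h e s x)
      (s * gavg (fun w => fderiv ℝ (fun w => fderiv ℝ h w e) w e) e s x) s := by
  rw [← stein hd' hB' hB'']
  exact gavg_hasDerivAt hd hB hB' x s

lemma shear_mp {α : Type*} [MeasurableSpace α] (ν : Measure α) [SFinite ν] (e : E) (c : α → ℝ)
    (hc : Measurable c) :
    MeasurePreserving (fun p : α × E => (p.1, p.2 - c p.1 • e)) (ν.prod volume)
      (ν.prod volume) := by
  refine (MeasurePreserving.id ν).skew_product (g := fun a x => x - c a • e) ?_ ?_
  · exact measurable_snd.sub ((hc.comp measurable_fst).smul_const e)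
  · refine ae_of_all _ fun a => ?_
    exact (measurePreserving_sub_right volume (c a • e)).map_eq

lemma shear_int {α : Type*} [MeasurableSpace α] (ν : Measure α) [IsFiniteMeasure ν] (e : E)
    (c : α → ℝ) (hc : Measurable c) {g : E → ℝ} (hg : Integrable g) :
    Integrable (fun p : α × E => g (p.2 - c p.1 • e)) (ν.prod volume) := by
  have h1 : Integrable (fun p : α × E => g p.2) (ν.prod volume) := hg.comp_snd ν
  exact (shear_mp ν e c hc).integrable_comp_of_integrable h1

lemma gavg_int2 {g : E → ℝ} (hg : Integrable g) (e : E) (s : ℝ) :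
    Integrable (fun p : ℝ × E => g (p.2 - (s * p.1) • e)) ((gaussianReal 0 1).prod volume) :=
  shear_int _ e (fun z => s * z) (by fun_prop) hg

lemma gavg_integrable {g : E → ℝ} (hg : Integrable g) (e : E) (s : ℝ) :
    Integrable (gavg g e s) := (gavg_int2 hg e s).integral_prod_right

lemma gavg_integral {g : E → ℝ} (hg : Integrable g) (e : E) (s : ℝ) :
    ∫ x, gavg g e s x = ∫ x, g x := by
  unfold gavg
  rw [← integral_integral_swap (gavg_int2 hg e s)]
  simp [integral_sub_right_eq_self]

lemma gavg_norm_le {g : E → ℝ} (hg : Integrable g) (e : E) (s : ℝ) :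
    ∫ x, |gavg g e s x| ≤ ∫ x, |g x| := by
  rw [← gavg_integral hg.abs e s]
  refine integral_mono (gavg_integrable hg e s).abs (gavg_integrable hg.abs e s) fun x => ?_
  exact abs_integral_le_integral_abs

lemma gavg_int3 (ν : Measure ℝ) [IsFiniteMeasure ν] {g : E → ℝ} (hg : Integrable g) (e : E) :
    Integrable (fun p : ℝ × E => gavg g e p.1 p.2) (ν.prod volume) := by
  have h1 := shear_int (ν.prod (gaussianReal 0 1)) e (fun p => p.1 * p.2) (by fun_prop) hg
  have m1 := measurePreserving_prodAssoc ν (volume : Measure E) (gaussianReal 0 1)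
  have m2 := (MeasurePreserving.id ν).prod
    (Measure.measurePreserving_swap (μ := (volume : Measure E)) (ν := gaussianReal 0 1))
  have m3 := (measurePreserving_prodAssoc ν (gaussianReal 0 1) (volume : Measure E)).symm
  have h2 := ((m3.comp m2).comp m1).integrable_comp_of_integrable h1
  exact h2.integral_prod_left

lemma gauss_exp_int : Integrable (fun z : ℝ => Real.exp (z ^ 2 / 4)) (gaussianReal 0 1) := by
  rw [gaussianReal_of_var_ne_zero _ (by simp)]
  rw [integrable_withDensity_iff (measurable_gaussianPDF _ _)
    (ae_of_all _ fun z => ENNReal.ofReal_lt_top)]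
  have := (integrable_exp_neg_mul_sq (b := 1/4) (by norm_num)).const_mul ((√(2 * π))⁻¹)
  refine this.congr (ae_of_all _ fun z => ?_)
  simp only [toReal_gaussianPDF, gaussianPDFReal]
  rw [mul_left_comm, ← Real.exp_add]
  simp
  left; ring

lemma gaussE_int {b : ℝ} (hb : 0 < b) : Integrable (fun x : E => Real.exp (-b * ‖x‖ ^ 2)) := by
  by_contra h
  have h1 := GaussianFourier.integral_rexp_neg_mul_sq_norm (V := E) hb
  rw [integral_undef h] at h1
  have : 0 < (π / b) ^ (Module.finrank ℝ E / 2 : ℝ) := by positivity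
  linarith

lemma gavg_decay {h : E → ℝ} {e : E} (he : ‖e‖ = 1) {C ε r : ℝ} (hC : 0 < C) (hε : 0 < ε)
    (hr : 0 < r) (hm : Measurable h) (h0 : ∀ x, 0 ≤ h x)
    (hdec : ∀ x, h x ≤ C * Real.exp (-ε * ‖x‖ ^ 2)) :
    ∃ K c : ℝ, 0 < K ∧ 0 < c ∧ ∀ x, gavg h e r x ≤ K * Real.exp (-c * ‖x‖ ^ 2) := by
  set ε' := min ε (1 / (4 * r ^ 2)) with hε'
  have hp : 0 < ε' := by positivity
  have hle : ε' * r ^ 2 ≤ 1 / 4 := by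
    calc ε' * r ^ 2 ≤ 1 / (4 * r ^ 2) * r ^ 2 := by gcongr; exact min_le_right _ _
      _ = 1 / 4 := by field_simp
  set M := ∫ z, Real.exp (z ^ 2 / 4) ∂(gaussianReal 0 1)
  have hM : 0 ≤ M := integral_nonneg fun z => (Real.exp_pos _).le
  refine ⟨C * M + 1, ε' / 2, by positivity, by positivity, fun x => ?_⟩
  have hpt : ∀ z : ℝ, h (x - (r * z) • e) ≤
      C * Real.exp (-(ε' / 2) * ‖x‖ ^ 2) * Real.exp (z ^ 2 / 4) := by
    intro z
    refine (hdec _).trans ?_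
    rw [mul_assoc, ← Real.exp_add]
    gcongr
    have h1 : ‖x‖ ≤ ‖x - (r * z) • e‖ + |r * z| := by
      have := norm_add_le (x - (r * z) • e) ((r * z) • e)
      simpa [norm_smul, he] using this
    have h2 : ‖x‖ ^ 2 ≤ 2 * ‖x - (r * z) • e‖ ^ 2 + 2 * (r * z) ^ 2 := by
      rw [← sq_abs (r * z)]
      nlinarith [norm_nonneg x, sq_nonneg (‖x - (r * z) • e‖ - |r * z|)]
    have h3 : ε' * ‖x - (r * z) • e‖ ^ 2 ≤ ε * ‖x - (r * z) • e‖ ^ 2 := by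
      gcongr; exact min_le_left _ _
    have h4 : ε' * r ^ 2 * z ^ 2 ≤ 1 / 4 * z ^ 2 := by gcongr
    have h5 := mul_le_mul_of_nonneg_left h2 hp.le
    nlinarith
  have : gavg h e r x ≤ C * Real.exp (-(ε' / 2) * ‖x‖ ^ 2) * M := by
    rw [← integral_const_mul]
    refine integral_mono_of_nonneg (ae_of_all _ fun z => h0 _) (gauss_exp_int.const_mul _)
      (ae_of_all _ hpt)
  refine this.trans ?_
  have := Real.exp_pos (-(ε' / 2) * ‖x‖ ^ 2)
  nlinarith

/-- regularised entropy density -/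
noncomputable def psi (δ u : ℝ) : ℝ := Real.negMulLog (u + δ) - Real.negMulLog δ

lemma psi_bound {δ u K : ℝ} (hδ : 0 < δ) (hδ1 : δ ≤ 1) (hu : 0 ≤ u) (huK : u ≤ K) :
    |psi δ u| ≤ 2 * √u + (K + 2) * u := by
  rcases hu.eq_or_lt with rfl | hu
  · simp [psi]
  have e1 : psi δ u = -(u * Real.log (u + δ)) - δ * Real.log (1 + u / δ) := by
    have : 1 + u / δ = (u + δ) / δ := by field_simp; ring
    rw [this, Real.log_div (by positivity) hδ.ne']
    simp only [psi, Real.negMulLog]; ring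
  have a1 : 0 ≤ δ * Real.log (1 + u / δ) :=
    mul_nonneg hδ.le (Real.log_nonneg (by have : 0 ≤ u / δ := by positivity
                                          linarith))
  have a2 : δ * Real.log (1 + u / δ) ≤ u := by
    have := Real.log_le_sub_one_of_pos (show 0 < 1 + u / δ by positivity)
    calc δ * Real.log (1 + u / δ) ≤ δ * (u / δ) := by gcongr; linarith
      _ = u := by field_simp
  have a3 : u * Real.log (u + δ) ≤ u * (K + 1) := by
    have := Real.log_le_sub_one_of_pos (show 0 < u + δ by positivity)
    gcongr; linarith
  have a4 : -(2 * √u) ≤ u * Real.log (u + δ) := by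
    have b1 : Real.log u ≤ Real.log (u + δ) := Real.log_le_log hu (by linarith)
    have b2 : -(2 * √u) ≤ u * Real.log u := by
      have hs : 0 < √u := Real.sqrt_pos.2 hu
      have := Real.one_sub_inv_le_log_of_pos hs
      have b3 : Real.log u = 2 * Real.log √u := by rw [Real.log_sqrt hu.le]; ring
      have b4 : u = √u * √u := (Real.mul_self_sqrt hu.le).symm
      rw [b3]
      have : -(2 * √u) ≤ u * (2 * (1 - (√u)⁻¹)) := by
        have : u * (√u)⁻¹ = √u := by
          nth_rewrite 1 [b4]; field_simp
        nlinarith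
      refine this.trans ?_
      gcongr
    exact b2.trans (by gcongr)
  rw [e1, abs_le]
  have := Real.sqrt_nonneg u
  constructor <;> nlinarith

lemma psi_cont (δ : ℝ) : Continuous (psi δ) := by
  unfold psi
  have := Real.continuous_negMulLog
  fun_prop

lemma psi_dom {u : E → ℝ} (hm : Measurable u) (h0 : ∀ x, 0 ≤ u x) {K c : ℝ} (hK : 0 < K)
    (hc : 0 < c) (hu : ∀ x, u x ≤ K * Real.exp (-c * ‖x‖ ^ 2)) :
    ∃ G : E → ℝ, Integrable G ∧ ∀ δ, 0 < δ → δ ≤ 1 → ∀ x, |psi δ (u x)| ≤ G x := by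
  refine ⟨fun x => 2 * √K * Real.exp (-(c / 2) * ‖x‖ ^ 2)
      + (K + 2) * K * Real.exp (-c * ‖x‖ ^ 2),
    ((gaussE_int (by positivity)).const_mul _).add ((gaussE_int hc).const_mul _), ?_⟩
  intro δ hδ hδ1 x
  have h1 : u x ≤ K := by
    refine (hu x).trans ?_
    have : Real.exp (-c * ‖x‖ ^ 2) ≤ 1 := Real.exp_le_one_iff.2 (by
      have : 0 ≤ c * ‖x‖ ^ 2 := by positivity
      linarith)
    nlinarith
  refine (psi_bound hδ hδ1 (h0 x) h1).trans ?_
  have h2 : √(u x) ≤ √K * Real.exp (-(c / 2) * ‖x‖ ^ 2) := by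
    rw [← Real.sqrt_sq (Real.exp_pos (-(c / 2) * ‖x‖ ^ 2)).le, ← Real.sqrt_mul hK.le]
    apply Real.sqrt_le_sqrt
    refine (hu x).trans (le_of_eq ?_)
    rw [← Real.exp_nat_mul]
    congr 2; push_cast; ring
  have h3 := hu x
  have : (K + 2) * u x ≤ (K + 2) * (K * Real.exp (-c * ‖x‖ ^ 2)) := by gcongr
  nlinarith

lemma psi_integrable {u : E → ℝ} (hm : Measurable u) (h0 : ∀ x, 0 ≤ u x) {K c : ℝ} (hK : 0 < K)
    (hc : 0 < c) (hu : ∀ x, u x ≤ K * Real.exp (-c * ‖x‖ ^ 2)) {δ : ℝ} (hδ : 0 < δ)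
    (hδ1 : δ ≤ 1) : Integrable (fun x => psi δ (u x)) := by
  obtain ⟨G, hG, hb⟩ := psi_dom hm h0 hK hc hu
  exact hG.mono' ((psi_cont δ).measurable.comp hm).aestronglyMeasurable
    (ae_of_all _ fun x => hb δ hδ hδ1 x)

lemma psi_tendsto {u : E → ℝ} (hm : Measurable u) (h0 : ∀ x, 0 ≤ u x) {K c : ℝ} (hK : 0 < K)
    (hc : 0 < c) (hu : ∀ x, u x ≤ K * Real.exp (-c * ‖x‖ ^ 2)) {δ : ℕ → ℝ} (hδ : ∀ n, 0 < δ n)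
    (hδ1 : ∀ n, δ n ≤ 1) (hlim : Tendsto δ atTop (𝓝 0)) :
    Tendsto (fun n => ∫ x, psi (δ n) (u x)) atTop (𝓝 (∫ x, Real.negMulLog (u x))) := by
  obtain ⟨G, hG, hb⟩ := psi_dom hm h0 hK hc hu
  refine tendsto_integral_of_dominated_convergence G
    (fun n => ((psi_cont _).measurable.comp hm).aestronglyMeasurable) hG
    (fun n => ae_of_all _ fun x => hb _ (hδ n) (hδ1 n) x) (ae_of_all _ fun x => ?_)
  have hcn := Real.continuous_negMulLog
  have h1 : Tendsto (fun n => Real.negMulLog (u x + δ n)) atTop (𝓝 (Real.negMulLog (u x + 0))) :=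
    (hcn.tendsto _).comp (tendsto_const_nhds.add hlim)
  have h2 : Tendsto (fun n => Real.negMulLog (δ n)) atTop (𝓝 (Real.negMulLog 0)) :=
    (hcn.tendsto _).comp hlim
  simpa [psi] using h1.sub h2

lemma gavg_smeas {g : E → ℝ} (hm : Measurable g) (e : E) :
    StronglyMeasurable (fun p : ℝ × E => gavg g e p.1 p.2) := by
  have : StronglyMeasurable (fun p : (ℝ × E) × ℝ => g (p.1.2 - (p.1.1 * p.2) • e)) :=
    (hm.comp (by fun_prop)).stronglyMeasurable
  exact this.integral_prod_right

lemma logb {δ u B : ℝ} (hδ : 0 < δ) (hu : 0 ≤ u) (huB : |u| ≤ B) :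
    |-Real.log (u + δ) - 1| ≤ |Real.log δ| + |Real.log (B + δ)| + 1 := by
  have hu' := (abs_le.1 huB).2
  have h1 : Real.log δ ≤ Real.log (u + δ) := Real.log_le_log hδ (by linarith)
  have h2 : Real.log (u + δ) ≤ Real.log (B + δ) := Real.log_le_log (by linarith) (by linarith)
  have := neg_abs_le (Real.log δ)
  have := le_abs_self (Real.log (B + δ))
  have := abs_nonneg (Real.log δ)
  have := abs_nonneg (Real.log (B + δ))
  rw [abs_le]; constructor <;> linarith

/-- The standing assumptions. -/
structure Std (f : E → ℝ) (e : E) (B0 B1 B2 : ℝ) (L0 L1 : NNReal) : Prop where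
  hd : Differentiable ℝ f
  hp : Differentiable ℝ (fun w => fderiv ℝ f w e)
  h0 : ∀ x, 0 ≤ f x
  b0 : ∀ x, |f x| ≤ B0
  b1 : ∀ x, |fderiv ℝ f x e| ≤ B1
  b2 : ∀ x, |fderiv ℝ (fun w => fderiv ℝ f w e) x e| ≤ B2
  l0 : LipschitzWith L0 f
  l1 : LipschitzWith L1 (fun w => fderiv ℝ f w e)
  i0 : Integrable f
  i1 : Integrable (fun w => fderiv ℝ f w e)
  i2 : Integrable (fun w => fderiv ℝ (fun w => fderiv ℝ f w e) w e)
  one : ∫ x, f x = 1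

variable {f : E → ℝ} {e : E} {B0 B1 B2 : ℝ} {L0 L1 : NNReal}

lemma Std.fisher_int (H : Std f e B0 B1 B2 L0 L1) {δ : ℝ} (hδ : 0 < δ) (s : ℝ) :
    Integrable (fun x => gavg (fun w => fderiv ℝ f w e) e s x ^ 2 / (gavg f e s x + δ)) := by
  have hg := gavg_integrable H.i1 e s
  have hu := gavg_differentiable H.hd H.b0 H.l0 e s
  have hv := gavg_differentiable H.hp H.b1 H.l1 e s
  have := hg.mul_bdd (c := B1 / δ)
    (g := fun x => gavg (fun w => fderiv ℝ f w e) e s x / (gavg f e s x + δ)) ?_ ?_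
  · refine this.congr (ae_of_all _ fun x => ?_)
    simp only; ring
  · exact (hv.continuous.measurable.div
      (hu.continuous.measurable.add_const δ)).aestronglyMeasurable
  · refine ae_of_all _ fun x => ?_
    have h1 := gavg_bdd H.b1 e x s
    have h2 := gavg_nonneg H.h0 e x s
    have h3 : 0 ≤ B1 := (abs_nonneg _).trans h1
    rw [Real.norm_eq_abs, abs_div, abs_of_pos (show 0 < gavg f e s x + δ by linarith)]
    gcongr
    linarith

lemma Std.ibp (H : Std f e B0 B1 B2 L0 L1) {δ : ℝ} (hδ : 0 < δ) (s : ℝ) :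
    ∫ x, (-Real.log (gavg f e s x + δ) - 1) *
        gavg (fun w => fderiv ℝ (fun w => fderiv ℝ f w e) w e) e s x
      = ∫ x, gavg (fun w => fderiv ℝ f w e) e s x ^ 2 / (gavg f e s x + δ) := by
  set u := gavg f e s with hu_def
  set v := gavg (fun w => fderiv ℝ f w e) e s with hv_def
  have hu : Differentiable ℝ u := gavg_differentiable H.hd H.b0 H.l0 e s
  have hv : Differentiable ℝ v := gavg_differentiable H.hp H.b1 H.l1 e s
  have u0 : ∀ x, 0 ≤ u x := fun x => gavg_nonneg H.h0 e x s
  have upos : ∀ x, u x + δ ≠ 0 := fun x => by have := u0 x; positivity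
  have hF : ∀ x, HasFDerivAt (fun x => -Real.log (u x + δ) - 1)
      (-((u x + δ)⁻¹ • fderiv ℝ u x)) x := by
    intro x
    exact ((((hu x).hasFDerivAt.add_const δ).log (upos x)).neg).sub_const 1
  have hFe : ∀ x, fderiv ℝ (fun x => -Real.log (u x + δ) - 1) x e = -((u x + δ)⁻¹ * v x) := by
    intro x
    rw [(hF x).fderiv, hv_def, ← gavg_fderiv H.hd H.b0 H.l0 e x s]
    simp [hu_def]
  have hve : ∀ x, fderiv ℝ v x e =
      gavg (fun w => fderiv ℝ (fun w => fderiv ℝ f w e) w e) e s x := fun x =>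
    gavg_fderiv H.hp H.b1 H.l1 e x s
  have hFm : AEStronglyMeasurable (fun x => -Real.log (u x + δ) - 1) volume := by
    have := hu.continuous.measurable
    exact Measurable.aestronglyMeasurable (by fun_prop)
  have hFb : ∀ x, |-Real.log (u x + δ) - 1| ≤ |Real.log δ| + |Real.log (B0 + δ)| + 1 :=
    fun x => logb hδ (u0 x) (gavg_bdd H.b0 e x s)
  have hJ := H.fisher_int hδ s
  have key := integral_mul_fderiv_eq_neg_fderiv_mul_of_integrable (μ := (volume : Measure E))
    (f := fun x => -Real.log (u x + δ) - 1) (g := v) (v := e) ?_ ?_ ?_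
    (fun x _ => (hF x).differentiableAt) (fun x _ => hv x)
  · simp_rw [hFe, hve] at key
    rw [key, ← integral_neg]
    congr 1; ext x; field_simp
  · simp_rw [hFe]
    refine hJ.neg.congr (ae_of_all _ fun x => ?_)
    change -(v x ^ 2 / (u x + δ)) = -((u x + δ)⁻¹ * v x) * v x
    ring
  · simp_rw [hve]
    exact (gavg_integrable H.i2 e s).bdd_mul hFm (ae_of_all _ hFb)
  · exact (gavg_integrable H.i1 e s).bdd_mul hFm (ae_of_all _ hFb)

lemma psi_hasDerivAt {δ u : ℝ} (h : u + δ ≠ 0) :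
    HasDerivAt (psi δ) (-Real.log (u + δ) - 1) u := by
  have h1 := (Real.hasDerivAt_negMulLog h)
  have h2 : HasDerivAt (fun u => u + δ) 1 u := (hasDerivAt_id u).add_const δ
  have := (h1.comp u h2).sub_const (Real.negMulLog δ)
  exact this.congr_deriv (by ring)

lemma Std.entropy (H : Std f e B0 B1 B2 L0 L1) {δ : ℝ} (hδ : 0 < δ) {r : ℝ} (hr : 0 < r)
    (ir : Integrable (fun x => psi δ (gavg f e r x))) (if0 : Integrable (fun x => psi δ (f x))) :
    IntegrableOn (fun s => s * ∫ x, gavg (fun w => fderiv ℝ f w e) e s x ^ 2 /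
      (gavg f e s x + δ)) (Set.Ioc 0 r) ∧
    (∫ x, psi δ (gavg f e r x)) - ∫ x, psi δ (f x) =
      ∫ s in Set.Ioc 0 r, s * ∫ x, gavg (fun w => fderiv ℝ f w e) e s x ^ 2 /
      (gavg f e s x + δ) := by
  set D : ℝ → E → ℝ := fun s x => (-Real.log (gavg f e s x + δ) - 1) *
    (s * gavg (fun w => fderiv ℝ (fun w => fderiv ℝ f w e) w e) e s x) with hD
  have hDi : Integrable (fun p : ℝ × E => D p.1 p.2)
      ((volume.restrict (Set.Ioc 0 r)).prod volume) := by
    have h1 := gavg_int3 (volume.restrict (Set.Ioc 0 r)) H.i2 e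
    have h2 := h1.bdd_mul (c := r) (f := fun p : ℝ × E => p.1)
      measurable_fst.aestronglyMeasurable ?_
    · refine h2.bdd_mul (c := |Real.log δ| + |Real.log (B0 + δ)| + 1) ?_ ?_
      · have := (gavg_smeas H.hd.continuous.measurable e).measurable
        exact Measurable.aestronglyMeasurable (by fun_prop)
      · exact ae_of_all _ fun p => logb hδ (gavg_nonneg H.h0 e _ _) (gavg_bdd H.b0 e _ _)
    · have : ∀ᵐ s ∂(volume.restrict (Set.Ioc 0 r)), ‖s‖ ≤ r := by
        filter_upwards [ae_restrict_mem measurableSet_Ioc] with s hs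
        rw [Real.norm_eq_abs, abs_of_pos hs.1]; exact hs.2
      exact Measure.quasiMeasurePreserving_fst.ae this
  have hin : ∀ s, ∫ x, D s x = s * ∫ x, gavg (fun w => fderiv ℝ f w e) e s x ^ 2 /
      (gavg f e s x + δ) := by
    intro s
    rw [← H.ibp hδ s, ← integral_const_mul]
    congr 1; ext x; simp only [hD]; ring
  refine ⟨?_, ?_⟩
  · have := hDi.integral_prod_left
    simp_rw [hin] at this
    exact this
  · simp_rw [← hin]
    rw [integral_integral_swap hDi, ← integral_sub ir if0]
    refine integral_congr_ae ?_
    filter_upwards [hDi.prod_left_ae] with x hx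
    rw [← intervalIntegral.integral_of_le hr.le]
    rw [intervalIntegral.integral_eq_sub_of_hasDerivAt (f := fun s => psi δ (gavg f e s x))]
    · simp [gavg_zero]
    · intro s _
      have h1 := gavg_hasDerivAt' H.hd H.b0 H.b1 H.hp H.b2 x s
      have h2 : gavg f e s x + δ ≠ 0 := by
        have := gavg_nonneg H.h0 e x s
        positivity
      exact (psi_hasDerivAt h2).comp s h1
    · rw [intervalIntegrable_iff_integrableOn_Ioc_of_le hr.le]
      exact hx

lemma Std.cs (H : Std f e B0 B1 B2 L0 L1) {δ : ℝ} (hδ : 0 < δ) (s : ℝ) (R : ℝ) :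
    (∫ x in Metric.closedBall (0 : E) R, |gavg (fun w => fderiv ℝ f w e) e s x|) ^ 2 /
      (1 + δ * (volume (Metric.closedBall (0 : E) R)).toReal)
    ≤ ∫ x, gavg (fun w => fderiv ℝ f w e) e s x ^ 2 / (gavg f e s x + δ) := by
  set A := Metric.closedBall (0 : E) R
  set V := (volume A).toReal with hV
  set u := gavg f e s with hu_def
  set v := gavg (fun w => fderiv ℝ f w e) e s with hv_def
  have u0 : ∀ x, 0 ≤ u x := fun x => gavg_nonneg H.h0 e x s
  have hvi : Integrable v := gavg_integrable H.i1 e s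
  have hui : Integrable u := gavg_integrable H.i0 e s
  have hJ := H.fisher_int hδ s
  have hAfin : volume A ≠ ⊤ := measure_closedBall_lt_top.ne
  have hci : IntegrableOn (fun _ : E => δ) A := integrableOn_const hAfin
  have hW : ∫ x in A, (u x + δ) ≤ 1 + δ * V := by
    rw [integral_add hui.integrableOn hci]
    have h1 : ∫ x in A, u x ≤ ∫ x, u x := setIntegral_le_integral hui (ae_of_all _ u0)
    rw [hu_def, gavg_integral H.i0, H.one] at h1
    have h2 : ∫ x in A, δ = δ * V := by
      rw [setIntegral_const, smul_eq_mul, mul_comm]; rfl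
    rw [h2]; linarith
  set W := 1 + δ * V with hWd
  have hWpos : 0 < W := by
    have : 0 ≤ V := ENNReal.toReal_nonneg
    positivity
  set I := ∫ x in A, |v x| with hI
  set a := I / W with ha
  have h1 : 2 * a * I - a ^ 2 * ∫ x in A, (u x + δ) ≤ ∫ x in A, v x ^ 2 / (u x + δ) := by
    have i1 : Integrable (fun x => 2 * a * |v x|) (volume.restrict A) :=
      hvi.abs.integrableOn.const_mul _
    have i2 : Integrable (fun x => a ^ 2 * (u x + δ)) (volume.restrict A) :=
      (hui.integrableOn.add hci).const_mul _
    rw [hI, ← integral_const_mul, ← integral_const_mul, ← integral_sub i1 i2]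
    refine integral_mono (i1.sub i2) hJ.integrableOn fun x => ?_
    have hp : 0 < u x + δ := by have := u0 x; positivity
    simp only
    rw [le_div_iff₀ hp, ← sq_abs (v x)]
    nlinarith [sq_nonneg (|v x| - a * (u x + δ))]
  have h2 : ∫ x in A, v x ^ 2 / (u x + δ) ≤ ∫ x, v x ^ 2 / (u x + δ) :=
    setIntegral_le_integral hJ (ae_of_all _ fun x => by
      have := u0 x
      simp only [Pi.zero_apply]; positivity)
  have h3 : I ^ 2 / W = 2 * a * I - a ^ 2 * W := by
    rw [ha]; field_simp; ring
  have h4 : a ^ 2 * ∫ x in A, (u x + δ) ≤ a ^ 2 * W := by gcongr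
  linarith

lemma Std.main (H : Std f e B0 B1 B2 L0 L1) (he : ‖e‖ = 1) {C ε r : ℝ} (hC : 0 < C)
    (hε : 0 < ε) (hr : 0 < r) (hdec : ∀ x, f x ≤ C * Real.exp (-ε * ‖x‖ ^ 2)) :
    ∫ s in Set.Ioc 0 r, s * (∫ x, |gavg (fun w => fderiv ℝ f w e) e s x|) ^ 2 ≤
      (∫ x, Real.negMulLog (gavg f e r x)) - ∫ x, Real.negMulLog (f x) := by
  have hfm := H.hd.continuous.measurable
  have hpm := H.hp.continuous.measurable
  have hum : Measurable (gavg f e r) :=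
    (gavg_differentiable H.hd H.b0 H.l0 e r).continuous.measurable
  have hu0 : ∀ x, 0 ≤ gavg f e r x := fun x => gavg_nonneg H.h0 e x r
  obtain ⟨K, c, hK, hc, hu⟩ := gavg_decay he hC hε hr hfm H.h0 hdec
  set V : ℕ → ℝ := fun n => (volume (Metric.closedBall (0 : E) n)).toReal with hV
  have hV0 : ∀ n, 0 ≤ V n := fun n => ENNReal.toReal_nonneg
  set δ : ℕ → ℝ := fun n => 1 / ((n + 1) * (V n + 1)) with hδd
  have hδ : ∀ n, 0 < δ n := fun n => by have := hV0 n; positivity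
  have hδn : ∀ n, δ n ≤ 1 / ((n : ℝ) + 1) := fun n => by
    have := hV0 n
    simp only [hδd]
    apply one_div_le_one_div_of_le (by positivity)
    nlinarith [(Nat.cast_nonneg n : (0 : ℝ) ≤ n)]
  have hδ1 : ∀ n, δ n ≤ 1 := fun n => (hδn n).trans (by
    rw [div_le_one (by positivity)]; linarith [(Nat.cast_nonneg n : (0 : ℝ) ≤ n)])
  have hδV : ∀ n, δ n * V n ≤ 1 / ((n : ℝ) + 1) := fun n => by
    have := hV0 n
    simp only [hδd]
    rw [div_mul_eq_mul_div, div_le_div_iff₀ (by positivity) (by positivity)]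
    nlinarith [(Nat.cast_nonneg n : (0 : ℝ) ≤ n)]
  have hlim : Tendsto δ atTop (𝓝 0) :=
    squeeze_zero (fun n => (hδ n).le) hδn tendsto_one_div_add_atTop_nhds_zero_nat
  have hlimV : Tendsto (fun n => δ n * V n) atTop (𝓝 0) :=
    squeeze_zero (fun n => mul_nonneg (hδ n).le (hV0 n)) hδV
      tendsto_one_div_add_atTop_nhds_zero_nat
  have hR := (psi_tendsto hum hu0 hK hc hu hδ hδ1 hlim).sub
    (psi_tendsto hfm H.h0 hC hε hdec hδ hδ1 hlim)
  set G : ℕ → ℝ → ℝ := fun n s => s * ((∫ x in Metric.closedBall (0 : E) n,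
    |gavg (fun w => fderiv ℝ f w e) e s x|) ^ 2 / (1 + δ n * V n)) with hG
  set P := ∫ x, |fderiv ℝ f x e| with hP
  have hGm : ∀ n, AEStronglyMeasurable (G n) (volume.restrict (Set.Ioc 0 r)) := by
    intro n
    have h1 : StronglyMeasurable (fun p : ℝ × E => |gavg (fun w => fderiv ℝ f w e) e p.1 p.2|) :=
      (gavg_smeas hpm e).norm
    have h2 := (h1.integral_prod_right'
      (ν := volume.restrict (Metric.closedBall (0 : E) n))).measurable
    have h3 : Measurable fun s => ∫ x in Metric.closedBall (0 : E) n,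
      |gavg (fun w => fderiv ℝ f w e) e s x| := h2
    exact Measurable.aestronglyMeasurable (by fun_prop)
  have hI : ∀ n s, (∫ x in Metric.closedBall (0 : E) n,
      |gavg (fun w => fderiv ℝ f w e) e s x|) ≤ P := by
    intro n s
    refine (setIntegral_le_integral (gavg_integrable H.i1 e s).abs
      (ae_of_all _ fun x => abs_nonneg _)).trans ?_
    exact gavg_norm_le H.i1 e s
  have hGb : ∀ n, ∀ᵐ s ∂(volume.restrict (Set.Ioc 0 r)), ‖G n s‖ ≤ r * P ^ 2 := by
    intro n
    filter_upwards [ae_restrict_mem measurableSet_Ioc] with s hs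
    have hI0 : 0 ≤ ∫ x in Metric.closedBall (0 : E) n,
      |gavg (fun w => fderiv ℝ f w e) e s x| := integral_nonneg fun x => abs_nonneg _
    have hw : 1 ≤ 1 + δ n * V n := by
      have := mul_nonneg (hδ n).le (hV0 n); linarith
    have hs0 := hs.1
    rw [Real.norm_eq_abs, abs_of_nonneg (by simp only [hG]; positivity)]
    simp only [hG]
    have h5 : (∫ x in Metric.closedBall (0 : E) n,
      |gavg (fun w => fderiv ℝ f w e) e s x|) ^ 2 / (1 + δ n * V n) ≤ P ^ 2 := by
      refine (div_le_self (by positivity) hw).trans ?_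
      have := hI n s
      gcongr
    have := hs.2
    gcongr
  have hL : Tendsto (fun n => ∫ s in Set.Ioc 0 r, G n s) atTop
      (𝓝 (∫ s in Set.Ioc 0 r, s * (∫ x, |gavg (fun w => fderiv ℝ f w e) e s x|) ^ 2)) := by
    refine tendsto_integral_of_dominated_convergence (fun _ => r * P ^ 2) hGm
      (integrable_const _) hGb (ae_of_all _ fun s => ?_)
    have hcov : AECover (volume : Measure E) atTop
        (fun n : ℕ => Metric.closedBall (0 : E) (n : ℝ)) :=
      aecover_closedBall tendsto_natCast_atTop_atTop
    have h1 := hcov.integral_tendsto_of_countably_generated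
      (gavg_integrable H.i1 e s).abs
    have h2 := ((h1.pow 2).div (tendsto_const_nhds.add hlimV) (b := 1 + 0) (by norm_num)).const_mul s
    simpa [hG] using h2
  refine le_of_tendsto_of_tendsto' hL hR fun n => ?_
  obtain ⟨hi, heq⟩ := H.entropy (hδ n) hr (psi_integrable hum hu0 hK hc hu (hδ n) (hδ1 n))
    (psi_integrable hfm H.h0 hC hε hdec (hδ n) (hδ1 n))
  rw [heq]
  refine setIntegral_mono_on (Integrable.of_bound (hGm n) _ (hGb n)) hi measurableSet_Ioc
    fun s hs => ?_
  exact mul_le_mul_of_nonneg_left (H.cs (hδ n) s n) hs.1.le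

lemma q_le_sup {p : E → ℝ} {L : NNReal} (hL : LipschitzWith L p) (he : ‖e‖ = 1) (z : E) :
    |fderiv ℝ p z e| ≤ L := by
  have h1 := (fderiv ℝ p z).le_opNorm e
  have h2 := norm_fderiv_le_of_lipschitz ℝ (x₀ := z) hL
  rw [he, mul_one] at h1
  exact h1.trans h2

lemma q_le_sSup {p : E → ℝ} {L : NNReal} (hL : LipschitzWith L p) (he : ‖e‖ = 1) (x z : E)
    (hz : z ∈ Metric.closedBall x 1) :
    |fderiv ℝ p z e| ≤ sSup ((fun z => |fderiv ℝ p z e|) '' Metric.closedBall x 1) := by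
  refine le_csSup ⟨L, ?_⟩ ⟨z, hz, rfl⟩
  rintro _ ⟨w, _, rfl⟩
  exact q_le_sup hL he w

lemma p_le {f : E → ℝ} (hd : Differentiable ℝ f) {L : NNReal}
    (hp : Differentiable ℝ (fun w => fderiv ℝ f w e))
    (hL : LipschitzWith L (fun w => fderiv ℝ f w e)) (he : ‖e‖ = 1) (x : E) :
    |fderiv ℝ f x e| ≤ |f (x - e)| + |f x| +
      sSup ((fun z => |fderiv ℝ (fun w => fderiv ℝ f w e) z e|) '' Metric.closedBall x 1) := by
  obtain ⟨ξ, hξ, h1⟩ := exists_hasDerivAt_eq_slope (fun t : ℝ => f (x - t • e)) _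
    (show (0 : ℝ) < 1 by norm_num)
    (fun t _ => (line_hasDerivAt hd e x t).continuousAt.continuousWithinAt)
    (fun t _ => line_hasDerivAt hd e x t)
  obtain ⟨η, hη, h2⟩ := exists_hasDerivAt_eq_slope
    (fun t : ℝ => (fun w => fderiv ℝ f w e) (x - t • e)) _ hξ.1
    (fun t _ => (line_hasDerivAt hp e x t).continuousAt.continuousWithinAt)
    (fun t _ => line_hasDerivAt hp e x t)
  have h3 := q_le_sSup hL he x (x - η • e) (by
    rw [Metric.mem_closedBall, dist_eq_norm]
    have : |η| ≤ 1 := by rw [abs_of_pos hη.1]; linarith [hη.2, hξ.2]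
    simpa [norm_smul, he] using this)
  have hξ0 : ξ ≠ 0 := hξ.1.ne'
  simp only [sub_zero, div_one, one_smul, zero_smul] at h1 h2
  rw [eq_div_iff hξ0] at h2
  set S := sSup ((fun z => |fderiv ℝ (fun w => fderiv ℝ f w e) z e|) '' Metric.closedBall x 1)
  set q := fderiv ℝ (fun w => fderiv ℝ f w e) (x - η • e) e
  have h4 : |fderiv ℝ f x e| ≤ |f (x - e)| + |f x| + |q| * ξ := by
    have : fderiv ℝ f x e = -(f (x - e)) + f x + q * ξ := by linarith
    rw [this]
    refine (abs_add_le _ _).trans ?_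
    rw [abs_mul, abs_of_pos hξ.1]
    gcongr
    refine (abs_add_le _ _).trans ?_
    rw [abs_neg]
  have h5 : |q| * ξ ≤ |q| * 1 := by gcongr; exact hξ.2.le
  linarith

lemma densConv1_eq {d : ℕ} (f : EuclideanSpace ℝ (Fin d) → ℝ) (e : EuclideanSpace ℝ (Fin d))
    {s : ℝ} (hs : 0 < s) : densConv1 f e (s ^ 2) = gavg f e s := by
  ext x
  rw [gavg, int_gauss, densConv1]
  have h := Measure.integral_comp_mul_left (fun t : ℝ => f (x - t • e) *
    ((2 * Real.pi * s ^ 2) ^ (-(1 : ℝ) / 2) * Real.exp (-t ^ 2 / (2 * s ^ 2)))) s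
  rw [abs_of_pos (inv_pos.2 hs), smul_eq_mul, inv_mul_eq_div, eq_div_iff hs.ne'] at h
  rw [← h, ← integral_mul_const]
  congr 1; ext z
  have h1 : (2 * Real.pi * s ^ 2) ^ (-(1 : ℝ) / 2) = (√(2 * π))⁻¹ * s⁻¹ := by
    rw [neg_div, Real.rpow_neg (by positivity), ← Real.sqrt_eq_rpow,
      Real.sqrt_mul (by positivity), Real.sqrt_sq hs.le, mul_inv]
  have h2 : -(s * z) ^ 2 / (2 * s ^ 2) = -z ^ 2 / 2 := by field_simp
  rw [h1, h2]
  simp only [gaussianPDFReal, NNReal.coe_one, mul_one, sub_zero]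
  field_simp

end aux

theorem statement12 {d : ℕ} (hd : 0 < d) (r₁ : ℝ) (hr₁ : 0 < r₁)
    (f : EuclideanSpace ℝ (Fin d) → ℝ)
    (e₁ : EuclideanSpace ℝ (Fin d)) (he₁ : e₁ = EuclideanSpace.single ⟨0, hd⟩ 1)
    (hfm : Measurable f) (hf0 : ∀ x, 0 ≤ f x) (hfi : Integrable f) (hf1 : ∫ x, f x = 1)
    (C ε : ℝ) (hC : 0 < C) (hε : 0 < ε)
    (hdecay : ∀ x, f x ≤ C * Real.exp (-ε * ‖x‖ ^ 2))
    (hdiff : Differentiable ℝ f) (hdiff2 : Differentiable ℝ (fderiv ℝ f))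
    (hfbdd : ∃ B, ∀ x, |f x| ≤ B) (hflip : ∃ L : NNReal, LipschitzWith L f)
    (hpbdd : ∃ B, ∀ x, |fderiv ℝ f x e₁| ≤ B)
    (hplip : ∃ L : NNReal, LipschitzWith L fun x => fderiv ℝ f x e₁)
    (hsecond : Integrable fun x =>
      sSup ((fun z => |fderiv ℝ (fun w => fderiv ℝ f w e₁) z e₁|) '' Metric.closedBall x 1)) :
    1 / 2 * ∫ y in Set.Ioo 0 (r₁ ^ 2),
        (∫ x, |fderiv ℝ (densConv1 f e₁ y) x e₁|) ^ 2 ≤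
      (∫ x, Real.negMulLog (densConv1 f e₁ (r₁ ^ 2) x)) - ∫ x, Real.negMulLog (f x) := by
  have he : ‖e₁‖ = 1 := by rw [he₁]; simp
  obtain ⟨B0, b0⟩ := hfbdd
  obtain ⟨L0, l0⟩ := hflip
  obtain ⟨B1, b1⟩ := hpbdd
  obtain ⟨L1, l1⟩ := hplip
  have hp : Differentiable ℝ (fun w => fderiv ℝ f w e₁) :=
    hdiff2.clm_apply (differentiable_const e₁)
  have H : Std f e₁ B0 B1 L1 L0 L1 :=
    { hd := hdiff
      hp := hp
      h0 := hf0
      b0 := b0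
      b1 := b1
      b2 := fun x => q_le_sup l1 he x
      l0 := l0
      l1 := l1
      i0 := hfi
      i1 := by
        refine (((hfi.comp_sub_right e₁).abs.add hfi.abs).add hsecond).mono'
          hp.continuous.aestronglyMeasurable (ae_of_all _ fun x => ?_)
        exact p_le hdiff hp l1 he x
      i2 := by
        refine hsecond.mono'
          (measurable_fderiv_apply_const ℝ _ e₁).aestronglyMeasurable (ae_of_all _ fun x => ?_)
        exact q_le_sSup l1 he x x (Metric.mem_closedBall_self zero_le_one)
      one := hf1 }
  have key := H.main he hC hε hr₁ hdecay
  rw [densConv1_eq f e₁ hr₁]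
  refine le_trans (le_of_eq ?_) key
  have himg : Set.Ioo 0 (r₁ ^ 2) = (fun s : ℝ => s ^ 2) '' Set.Ioo 0 r₁ := by
    ext y
    constructor
    · rintro ⟨h1, h2⟩
      refine ⟨√y, ⟨Real.sqrt_pos.2 h1, ?_⟩, Real.sq_sqrt h1.le⟩
      rw [Real.sqrt_lt' hr₁]; exact h2
    · rintro ⟨s, ⟨h1, h2⟩, rfl⟩
      exact ⟨by positivity, by simp only; gcongr⟩
  rw [himg, integral_image_eq_integral_abs_deriv_smul measurableSet_Ioo
    (f' := fun s => 2 * s) (fun s _ => by simpa using (hasDerivAt_pow 2 s).hasDerivWithinAt)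
    (fun s hs t ht hst => by
      exact (sq_eq_sq₀ hs.1.le ht.1.le).1 hst), ← integral_const_mul,
    integral_Ioc_eq_integral_Ioo]
  refine setIntegral_congr_fun measurableSet_Ioo fun s hs => ?_
  beta_reduce
  rw [densConv1_eq f e₁ hs.1, abs_of_pos (by linarith [hs.1])]
  simp_rw [gavg_fderiv hdiff b0 l0 e₁]
  simp only [smul_eq_mul]
  ring
end

section
/- Let n ≥ 5 be an integer and let p(X) = X^n − 2X^{n−1} − X + 1, regarded as a polynomial with integer coefficients. Then: (1) p has a real root in the open interval ((1/2)^{2/√(n−1)}, 1); (2) p has a real root in the open interval (2, 2 + 2^{2−n}); (3) every complex root of p other than these two has modulus strictly less than 1; and (4) p is irreducible over ℚ. -/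
open Polynomial

lemma aux_big (k : ℕ) (z : ℂ) (h : z ^ (k + 4) * (z - 2) = z - 1) (hz : 1 ≤ ‖z‖) :
    7 / 4 ≤ ‖z‖ := by
  have hn : ‖z‖ ^ (k + 4) * ‖z - 2‖ = ‖z - 1‖ := by
    rw [← norm_pow, ← norm_mul, h]
  have h1 : ‖z - 2‖ ≤ ‖z - 1‖ := by
    rw [← hn]
    exact le_mul_of_one_le_left (norm_nonneg _) (one_le_pow₀ hz)
  have h2 : ‖z - 2‖ ^ 2 ≤ ‖z - 1‖ ^ 2 := by gcongr
  rw [← Complex.normSq_eq_norm_sq, ← Complex.normSq_eq_norm_sq, Complex.normSq_apply,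
    Complex.normSq_apply] at h2
  simp at h2
  have h3 : 3 / 2 ≤ z.re := by nlinarith
  have h4 : 3 / 2 ≤ ‖z‖ := h3.trans (Complex.re_le_norm z)
  have h5 : (3 / 2 : ℝ) ^ 4 ≤ ‖z‖ ^ (k + 4) := by
    calc (3 / 2 : ℝ) ^ 4 ≤ ‖z‖ ^ 4 := by gcongr
      _ ≤ ‖z‖ ^ (k + 4) := pow_le_pow_right₀ hz (by omega)
  have h6 : ‖z - 1‖ ≤ ‖z - 2‖ + 1 := by
    calc ‖z - 1‖ = ‖(z - 2) + 1‖ := by congr 1; ring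
      _ ≤ ‖z - 2‖ + ‖(1 : ℂ)‖ := norm_add_le _ _
      _ = _ := by simp
  have h7 : (2 : ℝ) ≤ ‖z‖ + ‖z - 2‖ := by
    calc (2 : ℝ) = ‖z - (z - 2)‖ := by simp
      _ ≤ _ := norm_sub_le _ _
  have h8 := mul_le_mul_of_nonneg_right h5 (norm_nonneg (z - 2))
  norm_num at h8
  linarith

lemma aux_pow (u v : ℂ) (r : ℝ) (hu : ‖u‖ ≤ r) (hv : ‖v‖ ≤ r) (m : ℕ) :
    ‖u ^ (m + 1) - v ^ (m + 1)‖ ≤ (m + 1) * r ^ m * ‖u - v‖ := by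
  have hr : 0 ≤ r := (norm_nonneg u).trans hu
  induction m with
  | zero => simp
  | succ m ih =>
    have : u ^ (m + 1 + 1) - v ^ (m + 1 + 1)
        = u ^ (m + 1) * (u - v) + (u ^ (m + 1) - v ^ (m + 1)) * v := by ring
    rw [this]
    refine (norm_add_le _ _).trans ?_
    rw [norm_mul, norm_mul, norm_pow]
    have a1 : ‖u‖ ^ (m + 1) * ‖u - v‖ ≤ r ^ (m + 1) * ‖u - v‖ := by gcongr
    have a2 : ‖u ^ (m + 1) - v ^ (m + 1)‖ * ‖v‖ ≤ ((m + 1) * r ^ m * ‖u - v‖) * r := by gcongr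
    push_cast
    calc _ ≤ _ := add_le_add a1 a2
      _ = _ := by ring

lemma aux_num (k : ℕ) : ((k : ℝ) + 4) * (4 / 7) ^ (k + 3) ≤ 3 / 4 := by
  induction k with
  | zero => norm_num
  | succ k ih =>
    have hp : (0 : ℝ) < (4 / 7) ^ (k + 3) := by positivity
    have hk : (0 : ℝ) ≤ k := by positivity
    have e : (4 / 7 : ℝ) ^ (k + 1 + 3) = (4 / 7) ^ (k + 3) * (4 / 7) := by ring
    rw [e]; push_cast
    nlinarith [mul_nonneg hk hp.le]

lemma aux_inv (k : ℕ) (z : ℂ) (h : z ^ (k + 4) * (z - 2) = z - 1) (hz : z ≠ 0) :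
    1 - 2 * z⁻¹ = z⁻¹ ^ (k + 4) - z⁻¹ ^ (k + 5) := by
  have e : z⁻¹ ^ (k + 4) * z ^ (k + 4) = 1 := by
    rw [← mul_pow, inv_mul_cancel₀ hz, one_pow]
  have e1 : z⁻¹ * z = 1 := inv_mul_cancel₀ hz
  have : z⁻¹ ^ (k + 4) * z⁻¹ * (z ^ (k + 4) * (z - 2)) = z⁻¹ ^ (k + 4) * z⁻¹ * (z - 1) := by rw [h]
  have l : z⁻¹ ^ (k + 4) * z⁻¹ * (z ^ (k + 4) * (z - 2)) = 1 - 2 * z⁻¹ := by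
    linear_combination (z⁻¹ * (z - 2)) * e + e1
  rw [← l, this]
  linear_combination (z⁻¹ ^ (k + 4)) * e1

lemma aux_unique (k : ℕ) (z w : ℂ) (h : z ^ (k + 4) * (z - 2) = z - 1) (hz : 1 ≤ ‖z‖)
    (h' : w ^ (k + 4) * (w - 2) = w - 1) (hw : 1 ≤ ‖w‖) : z = w := by
  have z1 := aux_big k z h hz
  have w1 := aux_big k w h' hw
  have z0 : z ≠ 0 := by rintro rfl; simp at z1; linarith
  have w0 : w ≠ 0 := by rintro rfl; simp at w1; linarith
  have ez := aux_inv k z h z0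
  have ew := aux_inv k w h' w0
  have nz : ‖z⁻¹‖ ≤ 4 / 7 := by
    rw [norm_inv, inv_le_comm₀ (by linarith) (by norm_num)]; linarith
  have nw : ‖w⁻¹‖ ≤ 4 / 7 := by
    rw [norm_inv, inv_le_comm₀ (by linarith) (by norm_num)]; linarith
  apply inv_injective
  generalize z⁻¹ = u at *
  generalize w⁻¹ = v at *
  by_contra hne
  have pos : 0 < ‖u - v‖ := norm_pos_iff.2 (sub_ne_zero.2 hne)
  have e : (2 : ℂ) * (u - v) = (u ^ (k + 4 + 1) - v ^ (k + 4 + 1))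
      - (u ^ (k + 3 + 1) - v ^ (k + 3 + 1)) := by
    linear_combination ew - ez
  have b1 := aux_pow u v _ nz nw (k + 4)
  have b2 := aux_pow u v _ nz nw (k + 3)
  have c1 := aux_num (k + 1)
  have c2 := aux_num k
  have e2 : 2 * ‖u - v‖ ≤ ‖u ^ (k + 4 + 1) - v ^ (k + 4 + 1)‖
      + ‖u ^ (k + 3 + 1) - v ^ (k + 3 + 1)‖ := by
    calc 2 * ‖u - v‖ = ‖(2 : ℂ) * (u - v)‖ := by simp
      _ ≤ _ := by rw [e]; exact norm_sub_le _ _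
  have d1 : (((k + 4 : ℕ) : ℝ) + 1) * (4 / 7) ^ (k + 4) ≤ 3 / 4 := by
    refine le_trans (le_of_eq ?_) c1
    push_cast; ring
  have d2 : (((k + 3 : ℕ) : ℝ) + 1) * (4 / 7) ^ (k + 3) ≤ 3 / 4 := by
    refine le_trans (le_of_eq ?_) c2
    push_cast; ring
  have f1 := mul_le_mul_of_nonneg_right d1 pos.le
  have f2 := mul_le_mul_of_nonneg_right d2 pos.le
  linarith

lemma aux_prod (s : Multiset ℂ) (h : ∀ z ∈ s, ‖z‖ < 1) : s = 0 ∨ ‖s.prod‖ < 1 := by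
  induction s using Multiset.induction_on with
  | empty => simp
  | cons a s ih =>
    right
    have ha := h a (by simp)
    rw [Multiset.prod_cons, norm_mul]
    rcases ih (fun z hz => h z (by simp [hz])) with rfl | h1
    · simpa using ha
    · nlinarith [norm_nonneg a, norm_nonneg s.prod]

lemma aux_deg (r : ℤ[X]) (hr : r.Monic) (h0 : r.coeff 0 ≠ 0)
    (h : ∀ z : ℂ, aeval z r = 0 → ‖z‖ < 1) : r.natDegree = 0 := by
  have hm : (r.map (Int.castRingHom ℂ)).Monic := hr.map _
  have hs : (r.map (Int.castRingHom ℂ)).Splits := IsAlgClosed.splits _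
  have hc := hs.coeff_zero_eq_prod_roots_of_monic hm
  have hd := hs.natDegree_eq_card_roots
  rw [hr.natDegree_map] at hd
  rcases aux_prod (r.map (Int.castRingHom ℂ)).roots (by
    intro z hz
    apply h
    have := (mem_roots'.1 hz).2
    rw [IsRoot, eval_map] at this
    simpa [aeval_def] using this) with h1 | h1
  · rw [hd, h1]; simp
  · exfalso
    rw [coeff_map] at hc
    have := congrArg norm hc
    rw [norm_mul, norm_pow] at this
    simp at this
    rw [← this] at h1
    have h2 : |r.coeff 0| < 1 := by exact_mod_cast h1
    exact h0 (Int.abs_lt_one_iff.1 h2)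

theorem statement16 (n : ℕ) (hn : 5 ≤ n)
    (p : Polynomial ℤ) (hp : p = X ^ n - 2 * X ^ (n - 1) - X + 1) :
    ∃ x₁ x₂ : ℝ,
      x₁ ∈ Set.Ioo ((1 / 2 : ℝ) ^ ((2 : ℝ) / Real.sqrt ((n : ℝ) - 1))) 1 ∧
      aeval x₁ p = 0 ∧
      x₂ ∈ Set.Ioo (2 : ℝ) (2 + (2 : ℝ) ^ ((2 : ℝ) - (n : ℝ))) ∧
      aeval x₂ p = 0 ∧
      (∀ z : ℂ, aeval z p = 0 → z ≠ (x₁ : ℂ) → z ≠ (x₂ : ℂ) → ‖z‖ < 1) ∧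
      Irreducible (p.map (Int.castRingHom ℚ)) := by
  obtain ⟨k, rfl⟩ : ∃ k, n = k + 5 := ⟨n - 5, by omega⟩
  have hp' : p = X ^ (k + 5) - 2 * X ^ (k + 4) - X + 1 := hp
  clear hp
  have evR : ∀ x : ℝ, aeval x p = x ^ (k + 4) * (x - 2) - x + 1 := by
    intro x; rw [hp']; simp [map_ofNat]; ring
  have evC : ∀ x : ℂ, aeval x p = x ^ (k + 4) * (x - 2) - x + 1 := by
    intro x; rw [hp']; simp [map_ofNat]; ring
  have cont : Continuous fun x : ℝ => x ^ (k + 4) * (x - 2) - x + 1 := by fun_prop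
  have hx1 : ∃ x ∈ Set.Ioo ((1 / 2 : ℝ) ^ ((2 : ℝ) / Real.sqrt (((k + 5 : ℕ) : ℝ) - 1))) 1,
      x ^ (k + 4) * (x - 2) - x + 1 = 0 := by
    have e4 : (((k + 5 : ℕ) : ℝ) - 1) = ((k + 4 : ℕ) : ℝ) := by push_cast; ring
    rw [e4]
    set s := Real.sqrt ((k + 4 : ℕ) : ℝ) with hs
    have hss : s * s = ((k + 4 : ℕ) : ℝ) := Real.mul_self_sqrt (by positivity)
    have hs2 : 2 ≤ s := by
      apply Real.le_sqrt_of_sq_le; push_cast; nlinarith [(Nat.cast_nonneg k : (0 : ℝ) ≤ k)]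
    have hs0 : 0 < s := by linarith
    set a := (1 / 2 : ℝ) ^ ((2 : ℝ) / s) with ha
    have ha0 : 0 < a := by positivity
    have ha1 : a < 1 := Real.rpow_lt_one (by norm_num) (by norm_num) (by positivity)
    have hapow : a ^ (k + 4) = (1 / 2 : ℝ) ^ (2 * s) := by
      rw [ha, ← Real.rpow_natCast, ← Real.rpow_mul (by norm_num), ← hss]
      congr 1; field_simp
    -- concavity bound
    have hconc : a ≤ 1 - 1 / s := by
      have := rpow_one_add_le_one_add_mul_self (s := (-1 / 2 : ℝ)) (p := 2 / s)
        (by norm_num) (by positivity) (by rw [div_le_one hs0]; exact hs2)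
      have e : (1 : ℝ) + -1 / 2 = 1 / 2 := by norm_num
      rw [e] at this
      refine this.trans (le_of_eq ?_)
      field_simp
      ring
    have hb : (1 / 2 : ℝ) ^ (2 * s) * (2 * s) ≤ 1 := by
      have h1 := one_add_mul_self_le_rpow_one_add (s := (1 : ℝ)) (p := 2 * s)
        (by norm_num) (by linarith)
      rw [one_div, Real.inv_rpow (by norm_num)]
      have h2 : (0 : ℝ) < 2 ^ (2 * s) := by positivity
      rw [inv_mul_le_iff₀ h2]
      norm_num at h1
      linarith
    have hb' : (1 / 2 : ℝ) ^ (2 * s) * 2 ≤ 1 / s := by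
      rw [le_div_iff₀ hs0]; linarith
    have hc0 : (0 : ℝ) < (1 / 2 : ℝ) ^ (2 * s) := by positivity
    have := intermediate_value_Ioo' ha1.le (cont.continuousOn (s := Set.Icc a 1))
    obtain ⟨x, hx, hx'⟩ := this (show (0 : ℝ) ∈ _ by
      constructor
      · norm_num
      · show 0 < a ^ (k + 4) * (a - 2) - a + 1
        rw [hapow]
        nlinarith [mul_pos hc0 ha0])
    exact ⟨x, hx, hx'⟩
  have hx2 : ∃ x ∈ Set.Ioo (2 : ℝ) (2 + (2 : ℝ) ^ ((2 : ℝ) - ((k + 5 : ℕ) : ℝ))),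
      x ^ (k + 4) * (x - 2) - x + 1 = 0 := by
    have e : (2 : ℝ) ^ ((2 : ℝ) - ((k + 5 : ℕ) : ℝ)) = (2 ^ (k + 3))⁻¹ := by
      rw [← Real.rpow_natCast, ← Real.rpow_neg (by norm_num)]
      congr 1; push_cast; ring
    rw [e]
    set d : ℝ := (2 ^ (k + 3))⁻¹ with hd
    have hd0 : 0 < d := by positivity
    have hd2 : 2 ^ (k + 3) * d = 1 := mul_inv_cancel₀ (by positivity)
    have hd1 : d < 1 := inv_lt_one_of_one_lt₀ (one_lt_pow₀ (by norm_num) (by omega))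
    have := intermediate_value_Ioo (by linarith : (2 : ℝ) ≤ 2 + d)
      (cont.continuousOn (s := Set.Icc 2 (2 + d)))
    obtain ⟨x, hx, hx'⟩ := this (show (0 : ℝ) ∈ _ by
      constructor
      · norm_num
      · show 0 < (2 + d) ^ (k + 4) * (2 + d - 2) - (2 + d) + 1
        have h1 : (2 : ℝ) ^ (k + 4) ≤ (2 + d) ^ (k + 4) := by gcongr; linarith
        have h2 := mul_le_mul_of_nonneg_right h1 hd0.le
        have h3 : (2 : ℝ) ^ (k + 4) * d = 2 := by rw [pow_succ]; linarith
        have h4 : 2 + d - 2 = d := by ring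
        rw [h4]
        linarith)
    exact ⟨x, hx, hx'⟩
  obtain ⟨x₁, hx₁, hr₁⟩ := hx1
  obtain ⟨x₂, hx₂, hr₂⟩ := hx2
  have x2gt : 2 < x₂ := hx₂.1
  have hr₂C : (x₂ : ℂ) ^ (k + 4) * ((x₂ : ℂ) - 2) = (x₂ : ℂ) - 1 := by
    have : x₂ ^ (k + 4) * (x₂ - 2) = x₂ - 1 := by linarith
    exact_mod_cast this
  have main : ∀ z : ℂ, aeval z p = 0 → z ≠ (x₂ : ℂ) → ‖z‖ < 1 := by
    intro z hz hne
    by_contra hlt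
    rw [evC] at hz
    refine hne (aux_unique k z x₂ (by linear_combination hz) (not_lt.1 hlt) hr₂C ?_)
    rw [Complex.norm_real, Real.norm_eq_abs, abs_of_pos (by linarith)]
    linarith
  refine ⟨x₁, x₂, hx₁, by rw [evR, hr₁], hx₂, by rw [evR, hr₂], fun z hz _ h => main z hz h, ?_⟩
  have hdeg : p.natDegree = k + 5 := by rw [hp']; compute_degree!
  have hmon : p.Monic := by
    rw [hp']; monicity!
  have hc0 : p.coeff 0 = 1 := by
    rw [hp', coeff_zero_eq_eval_zero]; simp
  have hder : aeval (x₂ : ℂ) (derivative p) ≠ 0 := by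
    have : aeval (x₂ : ℂ) (derivative p)
        = ((x₂ ^ (k + 3) * ((k + 5) * x₂ - 2 * (k + 4)) - 1 : ℝ) : ℂ) := by
      rw [hp']; simp [map_ofNat]; ring
    rw [this]
    have h1 : (1 : ℝ) ≤ x₂ ^ (k + 3) := one_le_pow₀ (by linarith)
    have h2 : 2 < (k + 5) * x₂ - 2 * (k + 4) := by
      nlinarith [(Nat.cast_nonneg k : (0 : ℝ) ≤ k)]
    have : 0 < x₂ ^ (k + 3) * ((k + 5) * x₂ - 2 * (k + 4)) - 1 := by nlinarith
    exact_mod_cast this.ne'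
  have key : ∀ f g : ℤ[X], f.Monic → g.Monic → f * g = p →
      aeval (x₂ : ℂ) f = 0 → g.natDegree = 0 := by
    intro f g hf hg hfg hfx
    apply aux_deg g hg
    · intro h
      rw [← hfg, mul_coeff_zero, h] at hc0
      simp at hc0
    · intro z hz
      apply main z
      · rw [← hfg, map_mul, hz, mul_zero]
      · rintro rfl
        apply hder
        rw [← hfg, derivative_mul, map_add, map_mul, map_mul, hz, hfx]
        simp
  have hirr : Irreducible p := by
    rw [hmon.irreducible_iff_natDegree]
    refine ⟨by rintro rfl; simp at hdeg, ?_⟩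
    intro f g hf hg hfg
    have : aeval (x₂ : ℂ) f * aeval (x₂ : ℂ) g = 0 := by
      rw [← map_mul, hfg, evC]; linear_combination hr₂C
    rcases mul_eq_zero.1 this with h | h
    · exact Or.inr (key f g hf hg hfg h)
    · exact Or.inl (key g f hg hf (by rw [mul_comm, hfg]) h)
  exact (hmon.irreducible_iff_irreducible_map_fraction_map (K := ℚ)).1 hirr
end
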